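/- Let μ be a finite positive Borel measure on [0,1) and let 0<s₁,s₂<∞. The following conditions are equivalent: (i) the operator I_μ is well defined on Q_{s₁} and bounded from Q_{s₁} into Q_{s₂}; (ii) the operator H_μ is well defined on Q_{s₁} and bounded from Q_{s₁} into Q_{s₂}; (iii) μ is a 1-logarithmic 1-Carleson measure. -/

import Mathlib

open MeasureTheory Set Metric ENNReal

noncomputable section

namespace PaperHankel

/-- The moment of order `n` of a measure on `[0,1)`:  `μ_n = ∫_{[0,1)} t^n dμ(t)`. -/
def mom (μ : Measure ℝ) (n : ℕ) : ℝ := ∫ t in Ico (0:ℝ) 1, t ^ n ∂μ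

/-- The `n`-th Taylor coefficient of `f` at `0`. -/
def tc (f : ℂ → ℂ) (n : ℕ) : ℂ := iteratedDeriv n f 0 / n.factorial

/-- The `n`-th Taylor coefficient of `H_μ f`, namely `∑_k μ_{n+k} a_k`. -/
def hmuCoeff (μ : Measure ℝ) (f : ℂ → ℂ) (n : ℕ) : ℂ :=
  ∑' k : ℕ, (mom μ (n + k) : ℂ) * tc f k

/-- `H_μ f` is well defined: each coefficient series converges absolutely, and the resulting
power series has radius of convergence at least `1`. -/
def HmuWD (μ : Measure ℝ) (f : ℂ → ℂ) : Prop :=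
  (∀ n : ℕ, Summable fun k : ℕ => ‖(mom μ (n + k) : ℂ) * tc f k‖) ∧
  ∀ z ∈ ball (0:ℂ) 1, Summable fun n : ℕ => ‖hmuCoeff μ f n * z ^ n‖

/-- The generalized Hilbert operator induced by the Hankel matrix of moments of `μ`. -/
def Hmu (μ : Measure ℝ) (f : ℂ → ℂ) : ℂ → ℂ :=
  fun z => ∑' n : ℕ, hmuCoeff μ f n * z ^ n

/-- `I_μ f` is well defined: the defining integral converges absolutely for every `z ∈ 𝔻`. -/
def ImuWD (μ : Measure ℝ) (f : ℂ → ℂ) : Prop :=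
  ∀ z ∈ ball (0:ℂ) 1, IntegrableOn (fun t : ℝ => f t / (1 - t * z)) (Ico (0:ℝ) 1) μ

/-- The integral operator `I_μ f (z) = ∫_{[0,1)} f(t)/(1-tz) dμ(t)`. -/
def Imu (μ : Measure ℝ) (f : ℂ → ℂ) : ℂ → ℂ :=
  fun z => ∫ t in Ico (0:ℝ) 1, f t / (1 - t * z) ∂μ

/-- The `p`-th circle mean `M_p(r,f)` raised into the Hardy norm shape:
`((1/2π) ∫_0^{2π} |f(r e^{iθ})|^p dθ)^{1/p}`. -/
def circMean (p : ℝ) (f : ℂ → ℂ) (r : ℝ) : ℝ :=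
  ((2 * Real.pi)⁻¹ * ∫ θ in (0:ℝ)..(2 * Real.pi),
      ‖f (r * Complex.exp (θ * Complex.I))‖ ^ p) ^ (1 / p)

/-- Membership in the Hardy space `H^p`. -/
def MemHardy (p : ℝ) (f : ℂ → ℂ) : Prop :=
  DifferentiableOn ℂ f (ball (0:ℂ) 1) ∧ ∃ M : ℝ, ∀ r ∈ Ico (0:ℝ) 1, circMean p f r ≤ M

/-- The `H^p` norm. -/
def hardyNorm (p : ℝ) (f : ℂ → ℂ) : ℝ :=
  sSup {x : ℝ | ∃ r ∈ Ico (0:ℝ) 1, x = circMean p f r}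

/-- Membership in `H^∞`: analytic and bounded on the unit disc. -/
def MemHinf (f : ℂ → ℂ) : Prop :=
  DifferentiableOn ℂ f (ball (0:ℂ) 1) ∧ ∃ M : ℝ, ∀ z ∈ ball (0:ℂ) 1, ‖f z‖ ≤ M

/-- The `H^∞` norm. -/
def hinfNorm (f : ℂ → ℂ) : ℝ := sSup {x : ℝ | ∃ z ∈ ball (0:ℂ) 1, x = ‖f z‖}

/-- The mean `M_2(r,g) = ((1/2π) ∫_0^{2π} |g(r e^{iθ})|² dθ)^{1/2}`. -/
def M2 (g : ℂ → ℂ) (r : ℝ) : ℝ :=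
  Real.sqrt ((2 * Real.pi)⁻¹ * ∫ θ in (0:ℝ)..(2 * Real.pi),
      ‖g (r * Complex.exp (θ * Complex.I))‖ ^ 2)

/-- Membership in the mean Lipschitz space `Λ²_{1/2}`:
`M_2(r,f') = O((1-r)^{-1/2})` as `r → 1⁻`. -/
def MemLambda (f : ℂ → ℂ) : Prop :=
  DifferentiableOn ℂ f (ball (0:ℂ) 1) ∧
  ∃ C : ℝ, ∀ r ∈ Ico (0:ℝ) 1, Real.sqrt (1 - r) * M2 (deriv f) r ≤ C

/-- The norm on `Λ²_{1/2}`. -/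
def lambdaNorm (f : ℂ → ℂ) : ℝ :=
  ‖f 0‖ + sSup {x : ℝ | ∃ r ∈ Ico (0:ℝ) 1, x = Real.sqrt (1 - r) * M2 (deriv f) r}

/-- `∫_𝔻 |f'(z)|² g(z,a)^s dA(z)` with `g(z,a) = log |(1- ā z)/(z-a)|` and `dA` the
normalized area measure, computed as a lower integral in `[0,∞]`. -/
def qsInt (s : ℝ) (f : ℂ → ℂ) (a : ℂ) : ℝ≥0∞ :=
  (ENNReal.ofReal Real.pi)⁻¹ * ∫⁻ z in ball (0:ℂ) 1,
    ENNReal.ofReal (‖deriv f z‖ ^ 2 * (Real.log ‖(1 - (starRingEnd ℂ) a * z) / (z - a)‖) ^ s)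

/-- Membership in `Q_s`: analytic on `𝔻` with `ρ_{Q_s}(f)² = sup_{a ∈ 𝔻} ∫ ... < ∞`. -/
def MemQs (s : ℝ) (f : ℂ → ℂ) : Prop :=
  DifferentiableOn ℂ f (ball (0:ℂ) 1) ∧ (⨆ a ∈ ball (0:ℂ) 1, qsInt s f a) < ⊤

/-- The norm on `Q_s`, `‖f‖ = |f(0)| + ρ_{Q_s}(f)`. -/
def qsNorm (s : ℝ) (f : ℂ → ℂ) : ℝ :=
  ‖f 0‖ + Real.sqrt (⨆ a ∈ ball (0:ℂ) 1, qsInt s f a).toReal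

/-- The condition `∫_{[0,1)} tⁿ log(1/(1-t)) dμ(t) = O(1/n)`, stated with the lower
integral so that in particular the integrals are finite. -/
def LogMomentBigO (μ : Measure ℝ) : Prop :=
  ∃ C > 0, ∀ n : ℕ, 1 ≤ n →
    (∫⁻ t in Ico (0:ℝ) 1, ENNReal.ofReal (t ^ n * Real.log (1 / (1 - t))) ∂μ) ≤
      ENNReal.ofReal (C / n)

/-- Membership in the Bloch space. -/
def MemBloch (f : ℂ → ℂ) : Prop :=
  DifferentiableOn ℂ f (ball (0:ℂ) 1) ∧
  ∃ M : ℝ, ∀ z ∈ ball (0:ℂ) 1, (1 - ‖z‖ ^ 2) * ‖deriv f z‖ ≤ M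

/-- The Bloch norm `‖f‖ = |f(0)| + ρ_B(f)`. -/
def blochNorm (f : ℂ → ℂ) : ℝ :=
  ‖f 0‖ + sSup {x : ℝ | ∃ z ∈ ball (0:ℂ) 1, x = (1 - ‖z‖ ^ 2) * ‖deriv f z‖}

/-- Membership in the Besov space `B^p`. -/
def MemBesov (p : ℝ) (f : ℂ → ℂ) : Prop :=
  DifferentiableOn ℂ f (ball (0:ℂ) 1) ∧
  IntegrableOn (fun z : ℂ => (1 - ‖z‖ ^ 2) ^ (p - 2) * ‖deriv f z‖ ^ p) (ball (0:ℂ) 1) volume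

/-- The Besov norm `‖f‖ = |f(0)| + ρ_p(f)`. -/
def besovNorm (p : ℝ) (f : ℂ → ℂ) : ℝ :=
  ‖f 0‖ + (Real.pi⁻¹ *
    ∫ z in ball (0:ℂ) 1, (1 - ‖z‖ ^ 2) ^ (p - 2) * ‖deriv f z‖ ^ p) ^ (1 / p)

/-- `μ` is an `α`-logarithmic `s`-Carleson measure on `[0,1)`. -/
def IsLogCarleson (μ : Measure ℝ) (α s : ℝ) : Prop :=
  ∃ C > 0, ∀ t ∈ Ico (0:ℝ) 1,
    (μ (Ico t 1)).toReal * Real.log (2 / (1 - t)) ^ α ≤ C * (1 - t) ^ s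

/-- `μ` is an `s`-Carleson measure on `[0,1)`. -/
def IsCarleson (μ : Measure ℝ) (s : ℝ) : Prop :=
  ∃ C > 0, ∀ t ∈ Ico (0:ℝ) 1, (μ (Ico t 1)).toReal ≤ C * (1 - t) ^ s

/-!
The integrand of `ρ_{Q_s}` is controlled near its pole `a` by the subharmonicity of `|f'|²`, which
gives the Bloch bound `(1 - |z|) |f'(z)| ≤ C ρ_{Q_s}(f)` and hence the growth estimate
`|f(z)| ≤ C ‖f‖ log (2 / (1 - |z|))`.

If `μ` is a `1`-logarithmic `1`-Carleson measure, then `log (2 / (1 - t)) dμ(t)` is an ordinary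
`1`-Carleson measure, so `|(I_μ f)'(z)| ≤ ∫ |f(t)| / |1 - t z|² dμ(t) ≤ C ‖f‖ / |1 - z|`, and a
function with derivative `O(1 / |1 - z|)` lies in every `Q_s`. Moreover Parseval's identity on
circles makes `∑ μ_k |a_k|` converge; Fubini then identifies `H_μ f` with `I_μ f`.

Conversely, both operators are tested on `log (2 / (1 - z))`, which lies in every `Q_s`: the Bloch
bound for its image at a real point `r` is a bound for `μ [r, 1) log (2 / (1 - r)) / (1 - r)`.
-/

open scoped Real ComplexConjugate

/-! ### Mean values over discs -/

theorem lintegral_ball_eq_lintegral_circleMap (c : ℂ) (R : ℝ) {G : ℂ → ℝ≥0∞} (hG : Measurable G) :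
    ∫⁻ z in ball c R, G z =
      ∫⁻ r in Ioo 0 R, ENNReal.ofReal r * ∫⁻ θ in Ioo (-π) π, G (circleMap c r θ) := by
  have hmeas : Measurable fun p : ℝ × ℝ => G (circleMap c p.1 p.2) := by
    unfold circleMap
    fun_prop
  have hsymm (p : ℝ × ℝ) : c + Complex.polarCoord.symm p = circleMap c p.1 p.2 := by
    simp [Complex.polarCoord_symm_apply, circleMap, Complex.exp_mul_I]
  have hset : polarCoord.target ∩ {p | c + Complex.polarCoord.symm p ∈ ball c R} =
      Ioo 0 R ×ˢ Ioo (-π) π := by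
    ext ⟨r, θ⟩
    have (hr : 0 < r) : c + Complex.polarCoord.symm (r, θ) ∈ ball c R ↔ r < R := by
      rw [mem_ball_iff_norm', sub_add_cancel_left, norm_neg, Complex.norm_polarCoord_symm,
        abs_of_pos hr]
    simp only [polarCoord_target, mem_inter_iff, mem_prod, mem_Ioi, mem_Ioo, mem_ofPred_eq]
    tauto
  have hpull : MeasurableSet {p | c + Complex.polarCoord.symm p ∈ ball c R} := by
    simp only [hsymm]
    exact (by unfold circleMap; fun_prop :
      Measurable fun p : ℝ × ℝ => circleMap c p.1 p.2) measurableSet_ball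
  calc ∫⁻ z in ball c R, G z
      = ∫⁻ z, (ball c R).indicator G (c + z) := by
        rw [← lintegral_indicator measurableSet_ball, lintegral_add_left_eq_self]
    _ = ∫⁻ p in polarCoord.target, {p | c + Complex.polarCoord.symm p ∈ ball c R}.indicator
          (fun p => ENNReal.ofReal p.1 * G (circleMap c p.1 p.2)) p := by
        rw [← Complex.lintegral_comp_polarCoord_symm]
        refine lintegral_congr fun p => ?_
        by_cases hp : c + Complex.polarCoord.symm p ∈ ball c R
        · rw [indicator_of_mem hp, indicator_of_mem (by exact hp), hsymm, smul_eq_mul]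
        · rw [indicator_of_notMem hp, indicator_of_notMem (by exact hp), smul_zero]
    _ = ∫⁻ p in Ioo 0 R ×ˢ Ioo (-π) π, ENNReal.ofReal p.1 * G (circleMap c p.1 p.2) := by
        rw [setLIntegral_indicator hpull, inter_comm, hset]
    _ = ∫⁻ r in Ioo 0 R, ENNReal.ofReal r * ∫⁻ θ in Ioo (-π) π, G (circleMap c r θ) := by
        rw [Measure.volume_eq_prod, setLIntegral_prod _ (by fun_prop)]
        exact lintegral_congr fun r =>
          lintegral_const_mul (ENNReal.ofReal r) (hmeas.comp measurable_prodMk_left)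

theorem ofReal_circleAverage_eq_lintegral {c : ℂ} {r : ℝ} {u : ℂ → ℝ} (hu : ∀ z, 0 ≤ u z)
    (hcont : ContinuousOn u (sphere c |r|)) :
    ENNReal.ofReal (2 * π * Real.circleAverage u c r) =
      ∫⁻ θ in Ioo (-π) π, ENNReal.ofReal (u (circleMap c r θ)) := by
  have hcirc : Continuous fun θ => u (circleMap c r θ) :=
    hcont.comp_continuous (continuous_circleMap c r) (circleMap_mem_sphere' c r)
  rw [Real.circleAverage_eq_integral_add (-π), smul_eq_mul,
    mul_inv_cancel_left₀ Real.two_pi_pos.ne',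
    intervalIntegral.integral_comp_add_right (fun θ => u (circleMap c r θ)), zero_add,
    show 2 * π + -π = π by ring, intervalIntegral.integral_of_le (by linarith [Real.pi_pos]),
    integral_Ioc_eq_integral_Ioo, ofReal_integral_eq_lintegral_ofReal
      (hcirc.integrableOn_Icc.mono_set Ioo_subset_Icc_self) (ae_of_all _ fun _ => hu _)]

theorem ofReal_norm_le_lintegral_circleMap {h : ℂ → ℂ} {c : ℂ} {r : ℝ} (hr : 0 < r)
    (hd : DifferentiableOn ℂ h (closedBall c r)) :
    ENNReal.ofReal (2 * π * ‖h c‖) ≤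
      ∫⁻ θ in Ioo (-π) π, ENNReal.ofReal ‖h (circleMap c r θ)‖ := by
  have hcont : ContinuousOn h (sphere c |r|) := by
    rw [abs_of_pos hr]
    exact hd.continuousOn.mono sphere_subset_closedBall
  have hmean : Real.circleAverage h c r = h c := by
    refine DiffContOnCl.circleAverage ?_
    rw [abs_of_pos hr]
    exact hd.diffContOnCl_ball subset_rfl
  rw [← ofReal_circleAverage_eq_lintegral (fun _ => norm_nonneg _) hcont.norm, ← hmean]
  gcongr
  rw [Real.circleAverage_def, Real.circleAverage_def, norm_smul, smul_eq_mul,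
    Real.norm_of_nonneg (by positivity)]
  gcongr
  exact intervalIntegral.norm_integral_le_integral_norm Real.two_pi_pos.le

theorem setLIntegral_ofReal_Ioo_zero {R : ℝ} (hR : 0 ≤ R) :
    ∫⁻ r in Ioo 0 R, ENNReal.ofReal r = ENNReal.ofReal (R ^ 2 / 2) := by
  have hint : IntegrableOn (fun r : ℝ => r) (Ioo 0 R) :=
    continuous_id.integrableOn_Icc.mono_set Ioo_subset_Icc_self
  have hnonneg : ∀ᵐ r ∂volume.restrict (Ioo 0 R), 0 ≤ r :=
    (ae_restrict_mem measurableSet_Ioo).mono fun r hr => hr.1.le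
  rw [← ofReal_integral_eq_lintegral_ofReal hint hnonneg, ← integral_Ioc_eq_integral_Ioo,
    ← intervalIntegral.integral_of_le hR, integral_id]
  simp

theorem ofReal_norm_le_lintegral_ball {h : ℂ → ℂ} {c : ℂ} {R : ℝ} (hmeas : Measurable h)
    (hR : 0 ≤ R) (hd : DifferentiableOn ℂ h (ball c R)) :
    ENNReal.ofReal (π * R ^ 2 * ‖h c‖) ≤ ∫⁻ z in ball c R, ENNReal.ofReal ‖h z‖ :=
  calc ENNReal.ofReal (π * R ^ 2 * ‖h c‖)
      = ENNReal.ofReal (R ^ 2 / 2) * ENNReal.ofReal (2 * π * ‖h c‖) := by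
        rw [← ENNReal.ofReal_mul (by positivity)]
        ring_nf
    _ = ∫⁻ r in Ioo 0 R, ENNReal.ofReal r * ENNReal.ofReal (2 * π * ‖h c‖) := by
        rw [lintegral_mul_const _ (by fun_prop), setLIntegral_ofReal_Ioo_zero hR]
    _ ≤ ∫⁻ r in Ioo 0 R, ENNReal.ofReal r *
          ∫⁻ θ in Ioo (-π) π, ENNReal.ofReal ‖h (circleMap c r θ)‖ := by
        refine setLIntegral_mono' measurableSet_Ioo fun r hr => ?_
        gcongr
        exact ofReal_norm_le_lintegral_circleMap hr.1 (hd.mono (closedBall_subset_ball hr.2))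
    _ = ∫⁻ z in ball c R, ENNReal.ofReal ‖h z‖ :=
        (lintegral_ball_eq_lintegral_circleMap c R hmeas.norm.ennreal_ofReal).symm

/-! ### The Green function near its pole -/

/-- The Green function `g(z, a) = log |(1 - ā z) / (z - a)|` of the unit disc with pole `a`. -/
def green (a z : ℂ) : ℝ := Real.log ‖(1 - conj a * z) / (z - a)‖

/-- The seminorm `ρ_{Q_s}(f)`, so that `qsNorm s f = ‖f 0‖ + qsSeminorm s f`. It is `0` (and not
infinite) if the supremum is infinite. -/
def qsSeminorm (s : ℝ) (f : ℂ → ℂ) : ℝ := √(⨆ a ∈ ball (0 : ℂ) 1, qsInt s f a).toReal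

theorem qsNorm_eq_add_qsSeminorm (s : ℝ) (f : ℂ → ℂ) : qsNorm s f = ‖f 0‖ + qsSeminorm s f := rfl

theorem norm_one_sub_conj_mul_sq_sub_norm_sub_sq (a z : ℂ) :
    ‖1 - conj a * z‖ ^ 2 - ‖z - a‖ ^ 2 = (1 - ‖a‖ ^ 2) * (1 - ‖z‖ ^ 2) := by
  simp only [← Complex.normSq_eq_norm_sq, Complex.normSq_apply, Complex.sub_re, Complex.sub_im,
    Complex.mul_re, Complex.mul_im, Complex.conj_re, Complex.conj_im, Complex.one_re,
    Complex.one_im]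
  ring

section NearPole

variable {a z : ℂ}

theorem norm_one_sub_conj_mul_mem_Icc (ha : ‖a‖ < 1) (hz : ‖z - a‖ ≤ (1 - ‖a‖) / 2) :
    ‖1 - conj a * z‖ ∈ Icc (1 - ‖a‖) (3 * (1 - ‖a‖)) := by
  have hdecomp : 1 - conj a * z = (1 - ‖a‖ ^ 2 : ℝ) - conj a * (z - a) := by
    have : conj a * a = (‖a‖ ^ 2 : ℝ) := by
      rw [mul_comm, Complex.mul_conj, Complex.normSq_eq_norm_sq]
    push_cast at this ⊢
    rw [mul_sub, this]
    ring
  have hmain : ‖((1 - ‖a‖ ^ 2 : ℝ) : ℂ)‖ = 1 - ‖a‖ ^ 2 := by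
    rw [Complex.norm_real, Real.norm_of_nonneg]
    nlinarith [norm_nonneg a]
  have hrest : ‖conj a * (z - a)‖ ≤ ‖a‖ * ((1 - ‖a‖) / 2) := by
    rw [norm_mul, RCLike.norm_conj]
    gcongr
  rw [hdecomp]
  have hlower := norm_sub_norm_le ((1 - ‖a‖ ^ 2 : ℝ) : ℂ) (conj a * (z - a))
  have hupper := norm_sub_le ((1 - ‖a‖ ^ 2 : ℝ) : ℂ) (conj a * (z - a))
  constructor <;> nlinarith [norm_nonneg a]

theorem log_two_le_green (ha : ‖a‖ < 1) (hza : z ≠ a) (hz : ‖z - a‖ ≤ (1 - ‖a‖) / 2) :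
    Real.log 2 ≤ green a z := by
  have hdist : 0 < ‖z - a‖ := norm_sub_pos_iff.mpr hza
  rw [green, norm_div]
  gcongr
  rw [le_div_iff₀ hdist]
  linarith [(norm_one_sub_conj_mul_mem_Icc ha hz).1]

end NearPole

/-! ### The Bloch bound and logarithmic growth of `Q_s` functions -/

section Bloch

variable {s : ℝ} {f : ℂ → ℂ}

theorem ball_half_one_sub_norm_subset {a : ℂ} (ha : ‖a‖ < 1) :
    ball a ((1 - ‖a‖) / 2) ⊆ ball 0 1 :=
  ball_subset_ball' (by rw [dist_zero_right]; linarith)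

theorem ofReal_norm_deriv_sq_le_qsInt (hs : 0 ≤ s) (hf : DifferentiableOn ℂ f (ball 0 1)) {a : ℂ}
    (ha : ‖a‖ < 1) :
    ENNReal.ofReal (Real.log 2 ^ s * ((1 - ‖a‖) / 2 * ‖deriv f a‖) ^ 2) ≤ qsInt s f a := by
  have hsub := ball_half_one_sub_norm_subset ha
  have hmean := ofReal_norm_le_lintegral_ball (h := fun z => deriv f z ^ 2)
    ((measurable_deriv f).pow_const 2) (R := (1 - ‖a‖) / 2) (by linarith)
    (((hf.deriv isOpen_ball).mono hsub).pow 2)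
  have : 0 < Real.log 2 := Real.log_pos one_lt_two
  calc ENNReal.ofReal (Real.log 2 ^ s * ((1 - ‖a‖) / 2 * ‖deriv f a‖) ^ 2)
      = (ENNReal.ofReal π)⁻¹ * (ENNReal.ofReal (Real.log 2 ^ s) *
          ENNReal.ofReal (π * ((1 - ‖a‖) / 2) ^ 2 * ‖deriv f a ^ 2‖)) := by
        rw [← ENNReal.ofReal_inv_of_pos Real.pi_pos, ← ENNReal.ofReal_mul (by positivity),
          ← ENNReal.ofReal_mul (by positivity), norm_pow]
        congr 1
        field_simp
    _ ≤ (ENNReal.ofReal π)⁻¹ * (ENNReal.ofReal (Real.log 2 ^ s) *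
          ∫⁻ z in ball a ((1 - ‖a‖) / 2), ENNReal.ofReal ‖deriv f z ^ 2‖) := by gcongr
    _ = (ENNReal.ofReal π)⁻¹ * ∫⁻ z in ball a ((1 - ‖a‖) / 2),
          ENNReal.ofReal (‖deriv f z‖ ^ 2 * Real.log 2 ^ s) := by
        rw [← lintegral_const_mul _ ((measurable_deriv f).pow_const 2).norm.ennreal_ofReal]
        congr 2 with z
        rw [← ENNReal.ofReal_mul (by positivity), norm_pow, mul_comm]
    _ ≤ (ENNReal.ofReal π)⁻¹ * ∫⁻ z in ball a ((1 - ‖a‖) / 2),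
          ENNReal.ofReal (‖deriv f z‖ ^ 2 * green a z ^ s) := by
        gcongr _ * ?_
        refine lintegral_mono_ae ?_
        filter_upwards [ae_restrict_of_ae (Measure.ae_ne volume a),
          ae_restrict_mem measurableSet_ball] with z hza hz
        gcongr
        exact log_two_le_green ha hza (mem_ball_iff_norm.mp hz).le
    _ ≤ qsInt s f a := by
        rw [qsInt]
        gcongr _ * ?_
        exact lintegral_mono_set hsub

theorem MemQs.norm_deriv_le (hs : 0 ≤ s) (hf : MemQs s f) {z : ℂ} (hz : ‖z‖ < 1) :
    (1 - ‖z‖) * ‖deriv f z‖ ≤ 2 / √(Real.log 2 ^ s) * qsSeminorm s f := by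
  have hlog : 0 < √(Real.log 2 ^ s) :=
    Real.sqrt_pos.mpr (Real.rpow_pos_of_pos (Real.log_pos one_lt_two) s)
  have hsup : qsInt s f z ≤ ⨆ a ∈ ball (0 : ℂ) 1, qsInt s f a :=
    le_iSup₂ (f := fun a _ => qsInt s f a) z (mem_ball_zero_iff.mpr hz)
  have hsq : Real.log 2 ^ s * ((1 - ‖z‖) / 2 * ‖deriv f z‖) ^ 2 ≤
      (⨆ a ∈ ball (0 : ℂ) 1, qsInt s f a).toReal :=
    (ENNReal.ofReal_le_iff_le_toReal hf.2.ne).mp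
      ((ofReal_norm_deriv_sq_le_qsInt hs hf.1 hz).trans hsup)
  have hsqrt : √(Real.log 2 ^ s) * ((1 - ‖z‖) / 2 * ‖deriv f z‖) ≤ qsSeminorm s f := by
    refine Real.le_sqrt_of_sq_le ?_
    rwa [mul_pow, Real.sq_sqrt (Real.rpow_nonneg (Real.log_nonneg one_le_two) s)]
  rw [div_mul_eq_mul_div, le_div_iff₀ hlog]
  linarith

end Bloch

section Growth

variable {f : ℂ → ℂ} {M : ℝ} {z : ℂ}

theorem log_two_le_log_two_div_one_sub {t : ℝ} (ht : t ∈ Ico (0 : ℝ) 1) :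
    Real.log 2 ≤ Real.log (2 / (1 - t)) := by
  have ht' : 0 < 1 - t := sub_pos.mpr ht.2
  gcongr
  rw [le_div_iff₀ ht']
  linarith [ht.1]

theorem log_two_div_one_sub_pos {t : ℝ} (ht : t ∈ Ico (0 : ℝ) 1) : 0 < Real.log (2 / (1 - t)) :=
  (Real.log_pos one_lt_two).trans_le (log_two_le_log_two_div_one_sub ht)

theorem norm_sub_le_log_of_norm_deriv_le (hf : DifferentiableOn ℂ f (ball 0 1))
    (hM : ∀ w ∈ ball (0 : ℂ) 1, (1 - ‖w‖) * ‖deriv f w‖ ≤ M) (hz : ‖z‖ < 1) :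
    ‖f z - f 0‖ ≤ M * Real.log (1 / (1 - ‖z‖)) := by
  have hpos : ∀ x ∈ Icc (0 : ℝ) 1, 0 < 1 - x * ‖z‖ := fun x hx => by
    linarith [mul_le_of_le_one_left (norm_nonneg z) hx.2]
  have hnorm : ∀ x ∈ Icc (0 : ℝ) 1, ‖x * z‖ = x * ‖z‖ := fun x hx => by
    rw [norm_mul, Complex.norm_real, Real.norm_of_nonneg hx.1]
  have hmem : ∀ x ∈ Icc (0 : ℝ) 1, x * z ∈ ball (0 : ℂ) 1 := fun x hx => by
    rw [mem_ball_zero_iff, hnorm x hx]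
    linarith [hpos x hx]
  have hf' : ∀ x ∈ Icc (0 : ℝ) 1,
      HasDerivAt (fun x : ℝ => f (x * z) - f 0) (deriv f (x * z) * z) x := fun x hx => by
    have hfx := (hf.differentiableAt (isOpen_ball.mem_nhds (hmem x hx))).hasDerivAt
    have hray := (Complex.ofRealCLM.hasDerivAt (x := x)).mul_const z
    simpa using (HasDerivAt.comp x hfx hray).sub_const (f 0)
  have hB' : ∀ x ∈ Icc (0 : ℝ) 1, HasDerivAt (fun x : ℝ => -(M * Real.log (1 - x * ‖z‖)))
      (M * (‖z‖ / (1 - x * ‖z‖))) x := fun x hx => by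
    have hlin := ((hasDerivAt_id' x).mul_const ‖z‖).const_sub 1
    exact ((hlin.log (hpos x hx).ne').const_mul M).fun_neg.congr_deriv (by ring)
  have hbound : ∀ x ∈ Ico (0 : ℝ) 1,
      ‖deriv f (x * z) * z‖ ≤ M * (‖z‖ / (1 - x * ‖z‖)) := fun x hx => by
    have hx' := Ico_subset_Icc_self hx
    have hderiv := hM _ (hmem x hx')
    rw [hnorm x hx'] at hderiv
    rw [norm_mul, ← mul_div_assoc, le_div_iff₀ (hpos x hx'), mul_comm, ← mul_assoc]
    gcongr
  have hmain := image_norm_le_of_norm_deriv_right_le_deriv_boundary'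
    (fun x hx => (hf' x hx).continuousAt.continuousWithinAt)
    (fun x hx => (hf' x (Ico_subset_Icc_self hx)).hasDerivWithinAt) (by simp)
    (fun x hx => (hB' x hx).continuousAt.continuousWithinAt)
    (fun x hx => (hB' x (Ico_subset_Icc_self hx)).hasDerivWithinAt) hbound
    (right_mem_Icc.mpr zero_le_one)
  simpa using hmain

theorem norm_le_log_of_norm_deriv_le (hf : DifferentiableOn ℂ f (ball 0 1))
    (hM : ∀ w ∈ ball (0 : ℂ) 1, (1 - ‖w‖) * ‖deriv f w‖ ≤ M) (hz : ‖z‖ < 1) :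
    ‖f z‖ ≤ (‖f 0‖ / Real.log 2 + M) * Real.log (2 / (1 - ‖z‖)) := by
  have : 0 < 1 - ‖z‖ := sub_pos.mpr hz
  have hM₀ : 0 ≤ M := le_trans (by simp) (hM 0 (mem_ball_self one_pos))
  have hlog : 0 < Real.log 2 := Real.log_pos one_lt_two
  have hlog_one : Real.log (1 / (1 - ‖z‖)) ≤ Real.log (2 / (1 - ‖z‖)) := by
    gcongr
    exact one_le_two
  have hlog_two := log_two_le_log_two_div_one_sub ⟨norm_nonneg z, hz⟩
  calc ‖f z‖ ≤ ‖f 0‖ + ‖f z - f 0‖ := by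
        simpa using norm_add_le (f 0) (f z - f 0)
    _ ≤ ‖f 0‖ / Real.log 2 * Real.log 2 + M * Real.log (1 / (1 - ‖z‖)) := by
        rw [div_mul_cancel₀ _ hlog.ne']
        gcongr
        exact norm_sub_le_log_of_norm_deriv_le hf hM hz
    _ ≤ (‖f 0‖ / Real.log 2 + M) * Real.log (2 / (1 - ‖z‖)) := by
        rw [add_mul]
        gcongr

theorem MemQs.exists_norm_le_mul_log {s : ℝ} (hs : 0 ≤ s) :
    ∃ C > 0, ∀ f, MemQs s f → ∀ z, ‖z‖ < 1 →
      ‖f z‖ ≤ C * qsNorm s f * Real.log (2 / (1 - ‖z‖)) := by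
  have : 0 < Real.log 2 := Real.log_pos one_lt_two
  refine ⟨(Real.log 2)⁻¹ + 2 / √(Real.log 2 ^ s), by positivity, fun f hf z hz => ?_⟩
  refine (norm_le_log_of_norm_deriv_le hf.1
    (fun w hw => hf.norm_deriv_le hs (mem_ball_zero_iff.mp hw)) hz).trans ?_
  have := (log_two_div_one_sub_pos ⟨norm_nonneg z, hz⟩).le
  have hsemi : 0 ≤ qsSeminorm s f := Real.sqrt_nonneg _
  gcongr
  calc ‖f 0‖ / Real.log 2 + 2 / √(Real.log 2 ^ s) * qsSeminorm s f
      ≤ ‖f 0‖ / Real.log 2 + 2 / √(Real.log 2 ^ s) * qsSeminorm s f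
          + ((Real.log 2)⁻¹ * qsSeminorm s f + 2 / √(Real.log 2 ^ s) * ‖f 0‖) :=
        le_add_of_nonneg_right (by positivity)
    _ = ((Real.log 2)⁻¹ + 2 / √(Real.log 2 ^ s)) * qsNorm s f := by
        rw [qsNorm_eq_add_qsSeminorm]
        ring

end Growth

/-! ### Kernel integrals -/

section Kernels

theorem circleAverage_inv_norm_sub_sq {c w : ℂ} {R : ℝ} (hw : w ∈ ball c R) :
    Real.circleAverage (fun z => (‖z - w‖ ^ 2)⁻¹) c R = (R ^ 2 - ‖w - c‖ ^ 2)⁻¹ := by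
  have hwR : ‖w - c‖ < R := mem_ball_iff_norm.mp hw
  have hR : 0 < R := (norm_nonneg _).trans_lt hwR
  have hgap : 0 < R ^ 2 - ‖w - c‖ ^ 2 := by
    rw [sub_pos]
    gcongr
  calc Real.circleAverage (fun z => (‖z - w‖ ^ 2)⁻¹) c R
      = Real.circleAverage
          ((R ^ 2 - ‖w - c‖ ^ 2)⁻¹ • (poissonKernel c w • fun _ => (1 : ℝ))) c R := by
        refine Real.circleAverage_congr_sphere fun z hz => ?_
        have hzc : ‖z - c‖ = R := by simpa [abs_of_pos hR] using hz
        change _ = (R ^ 2 - ‖w - c‖ ^ 2)⁻¹ * (poissonKernel c w z * 1)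
        rw [poissonKernel_def, hzc, sub_sub_sub_cancel_right]
        field_simp
    _ = (R ^ 2 - ‖w - c‖ ^ 2)⁻¹ := by
        open InnerProductSpace in
        rw [Real.circleAverage_smul, HarmonicOnNhd.circleAverage_poissonKernel_smul
          (harmonicOnNhd_const 1) hw, smul_eq_mul, mul_one]

theorem norm_one_sub_circleMap (r θ : ℝ) : ‖1 - circleMap 0 r θ‖ = ‖circleMap 0 1 θ - r‖ := by
  have hunit : circleMap 0 1 θ * conj (circleMap 0 1 θ) = 1 := by
    rw [Complex.mul_conj, Complex.normSq_eq_norm_sq, norm_circleMap_zero]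
    simp
  have hradial : circleMap 0 r θ = r * circleMap 0 1 θ := by simp [circleMap]
  calc ‖1 - circleMap 0 r θ‖ = ‖circleMap 0 1 θ * conj (circleMap 0 1 θ - r)‖ := by
        rw [map_sub, Complex.conj_ofReal, mul_sub, hunit, hradial, mul_comm (r : ℂ)]
    _ = ‖circleMap 0 1 θ - r‖ := by
        rw [norm_mul, RCLike.norm_conj, norm_circleMap_zero, abs_one, one_mul]

theorem lintegral_inv_norm_one_sub_circleMap_sq {r : ℝ} (hr₀ : 0 ≤ r) (hr : r < 1) :
    ∫⁻ θ in Ioo (-π) π, ENNReal.ofReal (‖1 - circleMap 0 r θ‖ ^ 2)⁻¹ =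
      ENNReal.ofReal (2 * π / (1 - r ^ 2)) := by
  have hmem : (r : ℂ) ∈ ball 0 1 := by simpa [abs_of_nonneg hr₀] using hr
  have hcont : ContinuousOn (fun z : ℂ => (‖z - r‖ ^ 2)⁻¹) (sphere 0 |1|) := by
    refine ContinuousOn.inv₀ (by fun_prop) fun z hz => ?_
    have hne : z ≠ r := fun h => by simp [h, abs_of_nonneg hr₀, hr.ne] at hz
    simpa [sub_eq_zero] using hne
  simp_rw [norm_one_sub_circleMap]
  rw [← ofReal_circleAverage_eq_lintegral (u := fun z => (‖z - r‖ ^ 2)⁻¹)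
    (fun z => by positivity) hcont, circleAverage_inv_norm_sub_sq hmem]
  simp [div_eq_mul_inv]

theorem setLIntegral_Ioc_rpow_sub_one {s δ : ℝ} (hs : 0 < s) (hδ : 0 ≤ δ) :
    ∫⁻ x in Ioc 0 δ, ENNReal.ofReal (x ^ (s - 1)) = ENNReal.ofReal (δ ^ s / s) := by
  have hint : IntegrableOn (fun x : ℝ => x ^ (s - 1)) (Ioc 0 δ) :=
    (intervalIntegrable_iff_integrableOn_Ioc_of_le hδ).mp
      (intervalIntegral.intervalIntegrable_rpow' (by linarith))
  have hnonneg : ∀ᵐ x ∂volume.restrict (Ioc 0 δ), 0 ≤ x ^ (s - 1) :=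
    (ae_restrict_mem measurableSet_Ioc).mono fun x hx => Real.rpow_nonneg hx.1.le _
  rw [← ofReal_integral_eq_lintegral_ofReal hint hnonneg,
    ← intervalIntegral.integral_of_le hδ, integral_rpow (Or.inl (by linarith)), sub_add_cancel,
    Real.zero_rpow hs.ne', sub_zero]

theorem setLIntegral_Ioi_rpow_neg_sub_one {s δ : ℝ} (hs : 0 < s) (hδ : 0 < δ) :
    ∫⁻ x in Ioi δ, ENNReal.ofReal (x ^ (-s - 1)) = ENNReal.ofReal (δ ^ (-s) / s) := by
  have hnonneg : ∀ᵐ x ∂volume.restrict (Ioi δ), 0 ≤ x ^ (-s - 1) :=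
    (ae_restrict_mem measurableSet_Ioi).mono fun x hx => Real.rpow_nonneg (hδ.trans hx).le _
  rw [← ofReal_integral_eq_lintegral_ofReal (integrableOn_Ioi_rpow_of_lt (by linarith) hδ) hnonneg,
    integral_Ioi_rpow_of_lt (by linarith) hδ, sub_add_cancel, neg_div_neg_eq]

theorem setLIntegral_Ioc_rpow_mul_div_add_sq_div_le {s δ : ℝ} (hs : 0 < s) (hδ : 0 < δ) :
    ∫⁻ x in Ioc 0 δ, ENNReal.ofReal ((δ * x / (x + δ) ^ 2) ^ s / x) ≤ ENNReal.ofReal (1 / s) :=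
  calc ∫⁻ x in Ioc 0 δ, ENNReal.ofReal ((δ * x / (x + δ) ^ 2) ^ s / x)
      ≤ ∫⁻ x in Ioc 0 δ, ENNReal.ofReal (δ ^ (-s)) * ENNReal.ofReal (x ^ (s - 1)) := by
        refine setLIntegral_mono' measurableSet_Ioc fun x ⟨hx, _⟩ => ?_
        rw [← ENNReal.ofReal_mul (by positivity), Real.rpow_sub_one hx.ne', Real.rpow_neg hδ.le,
          ← mul_div_assoc, ← Real.inv_rpow hδ.le, ← Real.mul_rpow (by positivity) hx.le]
        gcongr
        rw [div_le_iff₀ (by positivity), inv_mul_eq_div, div_mul_eq_mul_div, le_div_iff₀ hδ]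
        nlinarith [mul_pos hx hx, mul_pos hx hδ, mul_pos (mul_pos hx hx) hδ, pow_pos hx 3]
    _ = ENNReal.ofReal (1 / s) := by
        rw [lintegral_const_mul _ (by fun_prop), setLIntegral_Ioc_rpow_sub_one hs hδ.le,
          ← ENNReal.ofReal_mul (by positivity), ← mul_div_assoc, ← Real.rpow_add hδ,
          neg_add_cancel, Real.rpow_zero]

theorem setLIntegral_Ioi_rpow_mul_div_add_sq_div_le {s δ : ℝ} (hs : 0 < s) (hδ : 0 < δ) :
    ∫⁻ x in Ioi δ, ENNReal.ofReal ((δ * x / (x + δ) ^ 2) ^ s / x) ≤ ENNReal.ofReal (1 / s) :=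
  calc ∫⁻ x in Ioi δ, ENNReal.ofReal ((δ * x / (x + δ) ^ 2) ^ s / x)
      ≤ ∫⁻ x in Ioi δ, ENNReal.ofReal (δ ^ s) * ENNReal.ofReal (x ^ (-s - 1)) := by
        refine setLIntegral_mono' measurableSet_Ioi fun x hx => ?_
        have hx₀ : 0 < x := hδ.trans hx
        rw [← ENNReal.ofReal_mul (by positivity), Real.rpow_sub_one hx₀.ne',
          Real.rpow_neg hx₀.le, ← mul_div_assoc, ← Real.inv_rpow hx₀.le,
          ← Real.mul_rpow hδ.le (by positivity)]
        gcongr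
        rw [div_le_iff₀ (by positivity), ← div_eq_mul_inv, div_mul_eq_mul_div, le_div_iff₀ hx₀]
        nlinarith [mul_pos hx₀ hδ, mul_pos hδ hδ, mul_pos (mul_pos hx₀ hδ) hδ, pow_pos hδ 3]
    _ = ENNReal.ofReal (1 / s) := by
        rw [lintegral_const_mul _ (by fun_prop), setLIntegral_Ioi_rpow_neg_sub_one hs hδ,
          ← ENNReal.ofReal_mul (by positivity), ← mul_div_assoc, ← Real.rpow_add hδ,
          add_neg_cancel, Real.rpow_zero]

theorem lintegral_rpow_mul_div_add_sq_div_le {s δ : ℝ} (hs : 0 < s) (hδ : 0 < δ) :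
    ∫⁻ x in Ioi 0, ENNReal.ofReal ((δ * x / (x + δ) ^ 2) ^ s / x) ≤ ENNReal.ofReal (2 / s) :=
  calc ∫⁻ x in Ioi 0, ENNReal.ofReal ((δ * x / (x + δ) ^ 2) ^ s / x)
      ≤ ENNReal.ofReal (1 / s) + ENNReal.ofReal (1 / s) := by
        rw [← Ioc_union_Ioi_eq_Ioi hδ.le]
        exact (lintegral_union_le _ _ _).trans
          (add_le_add (setLIntegral_Ioc_rpow_mul_div_add_sq_div_le hs hδ)
            (setLIntegral_Ioi_rpow_mul_div_add_sq_div_le hs hδ))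
    _ = ENNReal.ofReal (2 / s) := by
        rw [← ENNReal.ofReal_add (by positivity) (by positivity)]
        ring_nf

theorem lintegral_ball_inv_norm_sub_eq (a : ℂ) (R : ℝ) :
    ∫⁻ z in ball a R, ENNReal.ofReal ‖z - a‖⁻¹ = ENNReal.ofReal (2 * π * R) := by
  rw [lintegral_ball_eq_lintegral_circleMap a R (by fun_prop)]
  calc ∫⁻ r in Ioo 0 R, ENNReal.ofReal r *
        ∫⁻ θ in Ioo (-π) π, ENNReal.ofReal ‖circleMap a r θ - a‖⁻¹
      = ∫⁻ r in Ioo 0 R, ENNReal.ofReal (2 * π) := by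
        refine setLIntegral_congr_fun measurableSet_Ioo fun r ⟨hr, _⟩ => ?_
        simp only [circleMap_sub_center, norm_circleMap_zero, abs_of_pos hr]
        rw [setLIntegral_const, Real.volume_Ioo, ← ENNReal.ofReal_mul (by positivity),
          ← ENNReal.ofReal_mul hr.le, mul_inv_cancel_left₀ hr.ne']
        ring_nf
    _ = ENNReal.ofReal (2 * π * R) := by
        rw [setLIntegral_const, Real.volume_Ioo, sub_zero, ← ENNReal.ofReal_mul (by positivity)]

theorem lintegral_ball_rpow_div_norm_one_sub_sq_le {s δ : ℝ} (hs : 0 < s) (hδ : 0 < δ) :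
    ∫⁻ z in ball (0 : ℂ) 1, ENNReal.ofReal
        ((δ * (1 - ‖z‖) / (1 - ‖z‖ + δ) ^ 2) ^ s * (‖1 - z‖ ^ 2)⁻¹) ≤
      ENNReal.ofReal (4 * π / s) := by
  have hreflect : (fun x : ℝ => 1 - x) ⁻¹' Ioo 0 1 = Ioo 0 1 := by
    simp
  rw [lintegral_ball_eq_lintegral_circleMap 0 1 (by fun_prop)]
  calc ∫⁻ r in Ioo 0 1, ENNReal.ofReal r * ∫⁻ θ in Ioo (-π) π, ENNReal.ofReal
          ((δ * (1 - ‖circleMap 0 r θ‖) / (1 - ‖circleMap 0 r θ‖ + δ) ^ 2) ^ s *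
            (‖1 - circleMap 0 r θ‖ ^ 2)⁻¹)
      ≤ ∫⁻ r in Ioo 0 1, ENNReal.ofReal (2 * π) *
          ENNReal.ofReal ((δ * (1 - r) / (1 - r + δ) ^ 2) ^ s / (1 - r)) := by
        refine setLIntegral_mono' measurableSet_Ioo fun r ⟨hr₀, hr₁⟩ => ?_
        have hr : 0 < 1 - r := sub_pos.mpr hr₁
        have hsq : 1 - r ≤ 1 - r ^ 2 := by nlinarith
        have hr' : 0 < 1 - r ^ 2 := hr.trans_le hsq
        have hweight : 0 ≤ (δ * (1 - r) / (1 - r + δ) ^ 2) ^ s := by positivity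
        simp_rw [norm_circleMap_zero, abs_of_pos hr₀, ENNReal.ofReal_mul hweight]
        rw [lintegral_const_mul' _ _ ENNReal.ofReal_ne_top,
          lintegral_inv_norm_one_sub_circleMap_sq hr₀.le hr₁, ← ENNReal.ofReal_mul hweight,
          ← ENNReal.ofReal_mul hr₀.le, ← ENNReal.ofReal_mul (by positivity)]
        refine ENNReal.ofReal_le_ofReal ?_
        calc r * ((δ * (1 - r) / (1 - r + δ) ^ 2) ^ s * (2 * π / (1 - r ^ 2)))
            ≤ 1 * ((δ * (1 - r) / (1 - r + δ) ^ 2) ^ s * (2 * π / (1 - r))) := by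
              gcongr
          _ = 2 * π * ((δ * (1 - r) / (1 - r + δ) ^ 2) ^ s / (1 - r)) := by ring
    _ = ENNReal.ofReal (2 * π) * ∫⁻ x in Ioo 0 1,
          ENNReal.ofReal ((δ * x / (x + δ) ^ 2) ^ s / x) := by
        rw [lintegral_const_mul _ (by fun_prop),
          ← (Measure.measurePreserving_sub_left volume (1 : ℝ)).setLIntegral_comp_preimage
            measurableSet_Ioo (by fun_prop), hreflect]
        simp only [_root_.sub_sub_cancel]
    _ ≤ ENNReal.ofReal (2 * π) * ENNReal.ofReal (2 / s) := by
        gcongr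
        exact (lintegral_mono_set Ioo_subset_Ioi_self).trans
          (lintegral_rpow_mul_div_add_sq_div_le hs hδ)
    _ = ENNReal.ofReal (4 * π / s) := by
        rw [← ENNReal.ofReal_mul (by positivity)]
        ring_nf

end Kernels

/-! ### Kernel integrals against the Green function -/

section GreenBounds

variable {a z : ℂ} {s : ℝ}

theorem green_eq_half_log (hza : z ≠ a) :
    green a z =
      Real.log (1 + (1 - ‖a‖ ^ 2) * (1 - ‖z‖ ^ 2) / ‖z - a‖ ^ 2) / 2 := by
  have hdist : ‖z - a‖ ≠ 0 := norm_ne_zero_iff.mpr (sub_ne_zero.mpr hza)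
  rw [← norm_one_sub_conj_mul_sq_sub_norm_sub_sq, sub_div, div_self (pow_ne_zero 2 hdist),
    add_sub_cancel, ← div_pow, ← norm_div, Real.log_pow, green]
  push_cast
  ring

theorem green_nonneg (ha : ‖a‖ < 1) (hz : ‖z‖ < 1) : 0 ≤ green a z := by
  rcases eq_or_ne z a with rfl | hza
  · simp [green]
  have ha₂ : 0 ≤ 1 - ‖a‖ ^ 2 := sub_nonneg.mpr (pow_le_one₀ (norm_nonneg a) ha.le)
  have hz₂ : 0 ≤ 1 - ‖z‖ ^ 2 := sub_nonneg.mpr (pow_le_one₀ (norm_nonneg z) hz.le)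
  rw [green_eq_half_log hza]
  have hone : 1 ≤ 1 + (1 - ‖a‖ ^ 2) * (1 - ‖z‖ ^ 2) / ‖z - a‖ ^ 2 :=
    le_add_of_nonneg_right (by positivity)
  linarith [Real.log_nonneg hone]

theorem green_le_of_le_norm_sub (ha : ‖a‖ < 1) (hz : ‖z‖ < 1)
    (hfar : (1 - ‖a‖) / 2 ≤ ‖z - a‖) :
    green a z ≤ 50 * ((1 - ‖a‖) * (1 - ‖z‖) / (1 - ‖z‖ + (1 - ‖a‖)) ^ 2) := by
  have ha' : 0 < 1 - ‖a‖ := sub_pos.mpr ha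
  have : 0 < 1 - ‖z‖ := sub_pos.mpr hz
  have hdist : 0 < ‖z - a‖ := (half_pos ha').trans_le hfar
  have hza : z ≠ a := sub_ne_zero.mp (norm_pos_iff.mp hdist)
  have hsum : 1 - ‖z‖ + (1 - ‖a‖) ≤ 5 * ‖z - a‖ := by
    linarith [norm_sub_norm_le a z, norm_sub_rev a z]
  have hprod : (1 - ‖a‖ ^ 2) * (1 - ‖z‖ ^ 2) ≤ 4 * ((1 - ‖a‖) * (1 - ‖z‖)) :=
    calc (1 - ‖a‖ ^ 2) * (1 - ‖z‖ ^ 2)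
        = (1 + ‖a‖) * (1 + ‖z‖) * ((1 - ‖a‖) * (1 - ‖z‖)) := by ring
      _ ≤ (1 + 1) * (1 + 1) * ((1 - ‖a‖) * (1 - ‖z‖)) := by gcongr
      _ = 4 * ((1 - ‖a‖) * (1 - ‖z‖)) := by ring
  have hone : 0 ≤ (1 - ‖a‖ ^ 2) * (1 - ‖z‖ ^ 2) :=
    mul_nonneg (sub_nonneg.mpr (pow_le_one₀ (norm_nonneg a) ha.le))
      (sub_nonneg.mpr (pow_le_one₀ (norm_nonneg z) hz.le))
  calc green a z ≤ (1 - ‖a‖ ^ 2) * (1 - ‖z‖ ^ 2) / ‖z - a‖ ^ 2 / 2 := by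
        rw [green_eq_half_log hza]
        gcongr
        refine (Real.log_le_sub_one_of_pos (by positivity)).trans_eq (add_sub_cancel_left _ _)
    _ ≤ 50 * ((1 - ‖a‖) * (1 - ‖z‖) / (1 - ‖z‖ + (1 - ‖a‖)) ^ 2) := by
        rw [div_div, ← mul_div_assoc, div_le_div_iff₀ (by positivity) (by positivity)]
        calc (1 - ‖a‖ ^ 2) * (1 - ‖z‖ ^ 2) * (1 - ‖z‖ + (1 - ‖a‖)) ^ 2
            ≤ 4 * ((1 - ‖a‖) * (1 - ‖z‖)) * (5 * ‖z - a‖) ^ 2 := by gcongr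
          _ = 50 * ((1 - ‖a‖) * (1 - ‖z‖)) * (‖z - a‖ ^ 2 * 2) := by ring

theorem green_rpow_le_of_norm_sub_le (hs : 0 < s) (ha : ‖a‖ < 1) (hza : z ≠ a)
    (hnear : ‖z - a‖ ≤ (1 - ‖a‖) / 2) :
    green a z ^ s ≤ s ^ s * (3 * (1 - ‖a‖)) * ‖z - a‖⁻¹ := by
  have hgreen : 0 ≤ green a z :=
    (Real.log_nonneg one_le_two).trans (log_two_le_green ha hza hnear)
  calc green a z ^ s ≤ (‖(1 - conj a * z) / (z - a)‖ ^ s⁻¹ / s⁻¹) ^ s := by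
        gcongr
        exact Real.log_le_rpow_div (norm_nonneg _) (inv_pos.mpr hs)
    _ = s ^ s * (‖1 - conj a * z‖ * ‖z - a‖⁻¹) := by
        rw [div_inv_eq_mul, Real.mul_rpow (by positivity) hs.le,
          Real.rpow_inv_rpow (by positivity) hs.ne', mul_comm, norm_div, div_eq_mul_inv]
    _ ≤ s ^ s * (3 * (1 - ‖a‖)) * ‖z - a‖⁻¹ := by
        rw [mul_assoc]
        gcongr
        exact (norm_one_sub_conj_mul_mem_Icc ha hnear).2

theorem lintegral_ball_green_rpow_div_norm_one_sub_sq_le (hs : 0 < s) (ha : ‖a‖ < 1) :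
    ∫⁻ z in ball a ((1 - ‖a‖) / 2), ENNReal.ofReal (green a z ^ s * (‖1 - z‖ ^ 2)⁻¹) ≤
      ENNReal.ofReal (12 * π * s ^ s) := by
  have ha' : 0 < 1 - ‖a‖ := sub_pos.mpr ha
  calc ∫⁻ z in ball a ((1 - ‖a‖) / 2), ENNReal.ofReal (green a z ^ s * (‖1 - z‖ ^ 2)⁻¹)
      ≤ ∫⁻ z in ball a ((1 - ‖a‖) / 2),
          ENNReal.ofReal (12 * s ^ s / (1 - ‖a‖)) * ENNReal.ofReal ‖z - a‖⁻¹ := by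
        refine lintegral_mono_ae ?_
        filter_upwards [ae_restrict_mem measurableSet_ball,
          ae_restrict_of_ae (Measure.ae_ne volume a)] with z hz hza
        have hnear : ‖z - a‖ ≤ (1 - ‖a‖) / 2 := (mem_ball_iff_norm.mp hz).le
        have hpole : (1 - ‖a‖) / 2 ≤ ‖1 - z‖ := by
          have hnorm := norm_sub_norm_le (1 : ℂ) z
          rw [norm_one] at hnorm
          linarith [norm_sub_norm_le z a]
        rw [← ENNReal.ofReal_mul (by positivity)]
        refine ENNReal.ofReal_le_ofReal ?_
        calc green a z ^ s * (‖1 - z‖ ^ 2)⁻¹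
            ≤ s ^ s * (3 * (1 - ‖a‖)) * ‖z - a‖⁻¹ * (((1 - ‖a‖) / 2) ^ 2)⁻¹ := by
              gcongr
              exact green_rpow_le_of_norm_sub_le hs ha hza hnear
          _ = 12 * s ^ s / (1 - ‖a‖) * ‖z - a‖⁻¹ := by
              field_simp
              norm_num
    _ = ENNReal.ofReal (12 * π * s ^ s) := by
        rw [lintegral_const_mul _ (by fun_prop), lintegral_ball_inv_norm_sub_eq,
          ← ENNReal.ofReal_mul (by positivity)]
        congr 1
        field_simp

theorem lintegral_diff_ball_green_rpow_div_norm_one_sub_sq_le (hs : 0 < s) (ha : ‖a‖ < 1) :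
    ∫⁻ z in ball 0 1 \ ball a ((1 - ‖a‖) / 2),
        ENNReal.ofReal (green a z ^ s * (‖1 - z‖ ^ 2)⁻¹) ≤
      ENNReal.ofReal (50 ^ s * (4 * π / s)) := by
  have ha' : 0 < 1 - ‖a‖ := sub_pos.mpr ha
  calc ∫⁻ z in ball 0 1 \ ball a ((1 - ‖a‖) / 2),
        ENNReal.ofReal (green a z ^ s * (‖1 - z‖ ^ 2)⁻¹)
      ≤ ∫⁻ z in ball 0 1 \ ball a ((1 - ‖a‖) / 2), ENNReal.ofReal (50 ^ s) * ENNReal.ofReal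
          (((1 - ‖a‖) * (1 - ‖z‖) / (1 - ‖z‖ + (1 - ‖a‖)) ^ 2) ^ s * (‖1 - z‖ ^ 2)⁻¹) := by
        refine setLIntegral_mono' (measurableSet_ball.diff measurableSet_ball) fun z hz => ?_
        have hz₁ : ‖z‖ < 1 := mem_ball_zero_iff.mp hz.1
        have : 0 < 1 - ‖z‖ := sub_pos.mpr hz₁
        have hfar : (1 - ‖a‖) / 2 ≤ ‖z - a‖ := not_lt.mp (mt mem_ball_iff_norm.mpr hz.2)
        rw [← ENNReal.ofReal_mul (by positivity), ← mul_assoc,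
          ← Real.mul_rpow (by norm_num) (by positivity)]
        gcongr
        · exact green_nonneg ha hz₁
        · exact green_le_of_le_norm_sub ha hz₁ hfar
    _ ≤ ENNReal.ofReal (50 ^ s) * ENNReal.ofReal (4 * π / s) := by
        rw [lintegral_const_mul _ (by fun_prop)]
        gcongr
        exact (lintegral_mono_set sdiff_subset).trans
          (lintegral_ball_rpow_div_norm_one_sub_sq_le hs ha')
    _ = ENNReal.ofReal (50 ^ s * (4 * π / s)) := (ENNReal.ofReal_mul (by positivity)).symm

theorem lintegral_unitBall_green_rpow_div_norm_one_sub_sq_le (hs : 0 < s) (ha : ‖a‖ < 1) :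
    ∫⁻ z in ball 0 1, ENNReal.ofReal (green a z ^ s * (‖1 - z‖ ^ 2)⁻¹) ≤
      ENNReal.ofReal (12 * π * s ^ s + 50 ^ s * (4 * π / s)) := by
  rw [← union_sdiff_cancel (ball_half_one_sub_norm_subset ha),
    ENNReal.ofReal_add (by positivity) (by positivity)]
  exact (lintegral_union_le _ _ _).trans
    (add_le_add (lintegral_ball_green_rpow_div_norm_one_sub_sq_le hs ha)
      (lintegral_diff_ball_green_rpow_div_norm_one_sub_sq_le hs ha))

theorem iSup_qsInt_le_of_norm_deriv_le {F : ℂ → ℂ} {K : ℝ} (hs : 0 < s)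
    (hF : ∀ z ∈ ball (0 : ℂ) 1, ‖deriv F z‖ ≤ K / ‖1 - z‖) :
    ⨆ a ∈ ball (0 : ℂ) 1, qsInt s F a ≤
      ENNReal.ofReal ((12 * s ^ s + 50 ^ s * (4 / s)) * K ^ 2) := by
  refine iSup₂_le fun a ha => ?_
  have ha' : ‖a‖ < 1 := mem_ball_zero_iff.mp ha
  calc qsInt s F a
      ≤ (ENNReal.ofReal π)⁻¹ * ∫⁻ z in ball (0 : ℂ) 1,
          ENNReal.ofReal (K ^ 2) * ENNReal.ofReal (green a z ^ s * (‖1 - z‖ ^ 2)⁻¹) := by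
        unfold qsInt
        gcongr _ * ?_
        refine setLIntegral_mono' measurableSet_ball fun z hz => ?_
        have hgreen : 0 ≤ green a z ^ s :=
          Real.rpow_nonneg (green_nonneg ha' (mem_ball_zero_iff.mp hz)) s
        rw [← ENNReal.ofReal_mul (sq_nonneg K)]
        refine ENNReal.ofReal_le_ofReal ?_
        calc ‖deriv F z‖ ^ 2 * green a z ^ s ≤ (K / ‖1 - z‖) ^ 2 * green a z ^ s := by
              gcongr
              exact hF z hz
          _ = K ^ 2 * (green a z ^ s * (‖1 - z‖ ^ 2)⁻¹) := by
              rw [div_pow, div_eq_mul_inv]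
              ring
    _ ≤ (ENNReal.ofReal π)⁻¹ * (ENNReal.ofReal (K ^ 2) *
          ENNReal.ofReal (12 * π * s ^ s + 50 ^ s * (4 * π / s))) := by
        rw [lintegral_const_mul' _ _ ENNReal.ofReal_ne_top]
        gcongr
        exact lintegral_unitBall_green_rpow_div_norm_one_sub_sq_le hs ha'
    _ = ENNReal.ofReal ((12 * s ^ s + 50 ^ s * (4 / s)) * K ^ 2) := by
        rw [← ENNReal.ofReal_inv_of_pos Real.pi_pos, ← ENNReal.ofReal_mul (sq_nonneg K),
          ← ENNReal.ofReal_mul (by positivity)]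
        congr 1
        field_simp

theorem memQs_of_norm_deriv_le {F : ℂ → ℂ} {K : ℝ} (hs : 0 < s)
    (hd : DifferentiableOn ℂ F (ball 0 1))
    (hF : ∀ z ∈ ball (0 : ℂ) 1, ‖deriv F z‖ ≤ K / ‖1 - z‖) : MemQs s F :=
  ⟨hd, (iSup_qsInt_le_of_norm_deriv_le hs hF).trans_lt ENNReal.ofReal_lt_top⟩

theorem qsSeminorm_le_of_norm_deriv_le {F : ℂ → ℂ} {K : ℝ} (hs : 0 < s) (hK : 0 ≤ K)
    (hF : ∀ z ∈ ball (0 : ℂ) 1, ‖deriv F z‖ ≤ K / ‖1 - z‖) :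
    qsSeminorm s F ≤ √(12 * s ^ s + 50 ^ s * (4 / s)) * K := by
  calc qsSeminorm s F ≤ √((12 * s ^ s + 50 ^ s * (4 / s)) * K ^ 2) := by
        refine Real.sqrt_le_sqrt (ENNReal.toReal_le_of_le_ofReal (by positivity) ?_)
        exact iSup_qsInt_le_of_norm_deriv_le hs hF
    _ = √(12 * s ^ s + 50 ^ s * (4 / s)) * K := by
        rw [Real.sqrt_mul (by positivity), Real.sqrt_sq hK]

end GreenBounds

/-! ### Logarithmic Carleson measures -/

section LogCarleson

variable {μ : Measure ℝ} {α s t u : ℝ}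

theorem le_log_two_div_one_sub_iff (ht : t < 1) :
    u ≤ Real.log (2 / (1 - t)) ↔ 1 - 2 * Real.exp (-u) ≤ t := by
  have ht' : 0 < 1 - t := sub_pos.mpr ht
  rw [Real.le_log_iff_exp_le (by positivity), le_div_iff₀ ht', Real.exp_neg,
    ← div_eq_mul_inv, sub_le_comm, le_div_iff₀ (Real.exp_pos u), mul_comm]

theorem IsLogCarleson.exists_measure_Ico_le [IsFiniteMeasure μ] (h : IsLogCarleson μ α s) :
    ∃ C > 0, ∀ t ∈ Ico (0 : ℝ) 1,
      μ (Ico t 1) ≤ ENNReal.ofReal (C * (1 - t) ^ s / Real.log (2 / (1 - t)) ^ α) := by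
  obtain ⟨C, hC, h⟩ := h
  refine ⟨C, hC, fun t ht => ?_⟩
  have hlog : 0 < Real.log (2 / (1 - t)) ^ α := Real.rpow_pos_of_pos (log_two_div_one_sub_pos ht) α
  rw [← ENNReal.ofReal_toReal (measure_ne_top μ (Ico t 1))]
  exact ENNReal.ofReal_le_ofReal ((le_div_iff₀ hlog).mpr (h t ht))

theorem IsLogCarleson.isCarleson (hα : 0 ≤ α) (h : IsLogCarleson μ α s) : IsCarleson μ s := by
  obtain ⟨C, hC, h⟩ := h
  have hlog : 0 < Real.log 2 ^ α := Real.rpow_pos_of_pos (Real.log_pos one_lt_two) α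
  refine ⟨C / Real.log 2 ^ α, by positivity, fun t ht => ?_⟩
  rw [div_mul_eq_mul_div, le_div_iff₀ hlog]
  refine le_trans ?_ (h t ht)
  gcongr _ * ?_ ^ α
  exact log_two_le_log_two_div_one_sub ht

theorem setLIntegral_Ioi_exp_neg_mul (hs : 0 < s) (L : ℝ) :
    ∫⁻ u in Ioi L, ENNReal.ofReal (Real.exp (-s * u)) =
      ENNReal.ofReal (Real.exp (-s * L) / s) := by
  rw [← ofReal_integral_eq_lintegral_ofReal (integrableOn_exp_mul_Ioi (neg_lt_zero.mpr hs) L)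
    (.of_forall fun u => (Real.exp_pos _).le), integral_exp_mul_Ioi (neg_lt_zero.mpr hs),
    neg_div_neg_eq]

/-- The measure `log(2/(1-t))^α dμ(t)` on `[0,1)`. -/
def logWeighted (μ : Measure ℝ) (α : ℝ) : Measure ℝ :=
  (μ.restrict (Ico 0 1)).withDensity fun t => ENNReal.ofReal (Real.log (2 / (1 - t)) ^ α)

theorem setLIntegral_logWeighted {g : ℝ → ℝ≥0∞} (hg : Measurable g) {S : Set ℝ}
    (hS : MeasurableSet S) (hS' : S ⊆ Ico 0 1) :
    ∫⁻ t in S, g t ∂logWeighted μ α =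
      ∫⁻ t in S, ENNReal.ofReal (Real.log (2 / (1 - t)) ^ α) * g t ∂μ := by
  rw [logWeighted, setLIntegral_withDensity_eq_setLIntegral_mul _ (by fun_prop) hg hS,
    Measure.restrict_restrict_of_subset hS']
  rfl

theorem measure_le_log_mul_rpow_le {C : ℝ} (hC : 0 < C)
    (h : ∀ t ∈ Ico (0 : ℝ) 1,
      μ (Ico t 1) ≤ ENNReal.ofReal (C * (1 - t) ^ s / Real.log (2 / (1 - t)) ^ α))
    (hu : Real.log 2 ≤ u) :
    μ.restrict (Ico 0 1) {t | u ≤ Real.log (2 / (1 - t))} * ENNReal.ofReal (u ^ (α - 1)) ≤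
      ENNReal.ofReal (C * 2 ^ s / Real.log 2) * ENNReal.ofReal (Real.exp (-s * u)) := by
  have hlog : 0 < Real.log 2 := Real.log_pos one_lt_two
  have hu₀ : 0 < u := hlog.trans_le hu
  have hexp : Real.exp (-u) ≤ 1 / 2 := by
    rw [one_div, ← Real.exp_log two_pos, ← Real.exp_neg]
    gcongr
  have hmem : 1 - 2 * Real.exp (-u) ∈ Ico (0 : ℝ) 1 :=
    ⟨by linarith, by linarith [Real.exp_pos (-u)]⟩
  have hlevel : μ.restrict (Ico 0 1) {t | u ≤ Real.log (2 / (1 - t))} ≤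
      μ (Ico (1 - 2 * Real.exp (-u)) 1) := by
    rw [Measure.restrict_apply (measurableSet_le (by fun_prop) (by fun_prop))]
    exact measure_mono fun t ht => ⟨(le_log_two_div_one_sub_iff ht.2.2).mp ht.1, ht.2.2⟩
  have hpoint : Real.log (2 / (1 - (1 - 2 * Real.exp (-u)))) = u := by
    rw [_root_.sub_sub_cancel, div_mul_cancel_left₀ two_ne_zero, Real.exp_neg, inv_inv,
      Real.log_exp]
  calc _ ≤ ENNReal.ofReal (C * (2 * Real.exp (-u)) ^ s / u ^ α) *
          ENNReal.ofReal (u ^ (α - 1)) := by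
        gcongr
        refine hlevel.trans ((h _ hmem).trans_eq ?_)
        rw [hpoint, _root_.sub_sub_cancel]
    _ = ENNReal.ofReal (C * 2 ^ s / u * Real.exp (-s * u)) := by
        rw [← ENNReal.ofReal_mul (by positivity), Real.rpow_sub_one hu₀.ne',
          Real.mul_rpow two_pos.le (Real.exp_pos _).le, ← Real.exp_mul, mul_comm (-u), mul_neg,
          neg_mul]
        congr 1
        field_simp
    _ ≤ ENNReal.ofReal (C * 2 ^ s / Real.log 2) * ENNReal.ofReal (Real.exp (-s * u)) := by
        rw [← ENNReal.ofReal_mul (by positivity)]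
        gcongr

theorem setLIntegral_Ioc_measure_le_mul_rpow_le {Ω : Type*} [MeasurableSpace Ω] (ν : Measure Ω)
    (f : Ω → ℝ) {L : ℝ} (hα : 0 < α) (hL : 0 ≤ L) :
    ∫⁻ u in Ioc 0 L, ν {ω | u ≤ f ω} * ENNReal.ofReal (u ^ (α - 1)) ≤
      ν univ * ENNReal.ofReal (L ^ α / α) :=
  calc ∫⁻ u in Ioc 0 L, ν {ω | u ≤ f ω} * ENNReal.ofReal (u ^ (α - 1))
      ≤ ∫⁻ u in Ioc 0 L, ν univ * ENNReal.ofReal (u ^ (α - 1)) := by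
        gcongr
        exact subset_univ _
    _ = ν univ * ENNReal.ofReal (L ^ α / α) := by
        rw [lintegral_const_mul _ (by fun_prop), setLIntegral_Ioc_rpow_sub_one hα hL]

theorem setLIntegral_Ioi_measure_le_log_mul_rpow_le {C L : ℝ} (hC : 0 < C) (hs : 0 < s)
    (h : ∀ t ∈ Ico (0 : ℝ) 1,
      μ (Ico t 1) ≤ ENNReal.ofReal (C * (1 - t) ^ s / Real.log (2 / (1 - t)) ^ α))
    (hL : Real.log 2 ≤ L) :
    ∫⁻ u in Ioi L, μ.restrict (Ico 0 1) {t | u ≤ Real.log (2 / (1 - t))} *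
        ENNReal.ofReal (u ^ (α - 1)) ≤
      ENNReal.ofReal (C * (2 * Real.exp (-L)) ^ s / (s * Real.log 2)) :=
  calc _ ≤ ∫⁻ u in Ioi L, ENNReal.ofReal (C * 2 ^ s / Real.log 2) *
          ENNReal.ofReal (Real.exp (-s * u)) :=
        setLIntegral_mono' measurableSet_Ioi fun u hu =>
          measure_le_log_mul_rpow_le hC h (hL.trans (mem_Ioi.mp hu).le)
    _ = ENNReal.ofReal (C * (2 * Real.exp (-L)) ^ s / (s * Real.log 2)) := by
        have : 0 < Real.log 2 := Real.log_pos one_lt_two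
        rw [lintegral_const_mul _ (by fun_prop), setLIntegral_Ioi_exp_neg_mul hs,
          ← ENNReal.ofReal_mul (by positivity), neg_mul, mul_comm s, ← neg_mul, Real.exp_mul,
          Real.mul_rpow two_pos.le (Real.exp_pos _).le]
        congr 1
        field_simp

theorem logWeighted_Ico_eq_lintegral_measure_le (hα : 0 < α) (ht : 0 ≤ t) :
    logWeighted μ α (Ico t 1) = ENNReal.ofReal α * ∫⁻ u in Ioi 0,
      μ.restrict (Ico t 1) {τ | u ≤ Real.log (2 / (1 - τ))} * ENNReal.ofReal (u ^ (α - 1)) := by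
  have hsub : Ico t 1 ⊆ Ico (0 : ℝ) 1 := Ico_subset_Ico_left ht
  rw [← lintegral_rpow_eq_lintegral_meas_le_mul _ ?_ (by fun_prop) hα]
  · simpa using setLIntegral_logWeighted measurable_one measurableSet_Ico hsub
  · filter_upwards [ae_restrict_mem measurableSet_Ico] with τ hτ
    exact (log_two_div_one_sub_pos (hsub hτ)).le

-- Layer cake: below the level `L = log(2/(1-t))` bound the measure of the level set by `μ [t,1)`;
-- above it the hypothesis makes the tail decay exponentially.
theorem IsLogCarleson.exists_logWeighted_Ico_le [IsFiniteMeasure μ] (hα : 0 < α) (hs : 0 < s)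
    (h : IsLogCarleson μ α s) :
    ∃ C > 0, ∀ t ∈ Ico (0 : ℝ) 1,
      logWeighted μ α (Ico t 1) ≤ ENNReal.ofReal (C * (1 - t) ^ s) := by
  obtain ⟨C, hC, h⟩ := h.exists_measure_Ico_le
  have : 0 < Real.log 2 := Real.log_pos one_lt_two
  refine ⟨C * (1 + α / (s * Real.log 2)), by positivity, fun t ht => ?_⟩
  have hx : 0 < 1 - t := sub_pos.mpr ht.2
  set L := Real.log (2 / (1 - t)) with hL
  have hL₀ : 0 < L := log_two_div_one_sub_pos ht
  have hexp : 2 * Real.exp (-L) = 1 - t := by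
    rw [Real.exp_neg, hL, Real.exp_log (by positivity), inv_div, mul_div_cancel₀ _ two_ne_zero]
  have hbelow : ∫⁻ u in Ioc 0 L, μ.restrict (Ico t 1) {τ | u ≤ Real.log (2 / (1 - τ))} *
      ENNReal.ofReal (u ^ (α - 1)) ≤ ENNReal.ofReal (C * (1 - t) ^ s / α) :=
    calc _ ≤ μ (Ico t 1) * ENNReal.ofReal (L ^ α / α) := by
          simpa using setLIntegral_Ioc_measure_le_mul_rpow_le (μ.restrict (Ico t 1)) _ hα hL₀.le
      _ ≤ ENNReal.ofReal (C * (1 - t) ^ s / L ^ α) * ENNReal.ofReal (L ^ α / α) := by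
          gcongr
          exact h t ht
      _ = ENNReal.ofReal (C * (1 - t) ^ s / α) := by
          rw [← ENNReal.ofReal_mul (by positivity)]
          congr 1
          field_simp
  have habove : ∫⁻ u in Ioi L, μ.restrict (Ico t 1) {τ | u ≤ Real.log (2 / (1 - τ))} *
      ENNReal.ofReal (u ^ (α - 1)) ≤ ENNReal.ofReal (C * (1 - t) ^ s / (s * Real.log 2)) := by
    refine le_trans ?_ ((setLIntegral_Ioi_measure_le_log_mul_rpow_le hC hs h
      (log_two_le_log_two_div_one_sub ht)).trans_eq (by rw [hexp]))
    gcongr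
    exact ht.1
  rw [logWeighted_Ico_eq_lintegral_measure_le hα ht.1, ← Ioc_union_Ioi_eq_Ioi hL₀.le]
  calc _ ≤ ENNReal.ofReal α * (ENNReal.ofReal (C * (1 - t) ^ s / α) +
          ENNReal.ofReal (C * (1 - t) ^ s / (s * Real.log 2))) := by
        gcongr
        exact (lintegral_union_le _ _ _).trans (add_le_add hbelow habove)
    _ = ENNReal.ofReal (C * (1 + α / (s * Real.log 2)) * (1 - t) ^ s) := by
        rw [← ENNReal.ofReal_add (by positivity) (by positivity), ← ENNReal.ofReal_mul hα.le]
        congr 1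
        field_simp

end LogCarleson

section CarlesonIntegrals

variable {μ ν : Measure ℝ} {C d p s : ℝ}

theorem measure_Ico_max_le (hC : 0 ≤ C) (hs : 0 ≤ s)
    (hν : ∀ t ∈ Ico (0 : ℝ) 1, ν (Ico t 1) ≤ ENNReal.ofReal (C * (1 - t) ^ s)) {x : ℝ}
    (hx : 0 < x) : ν (Ico (max 0 (1 - x)) 1) ≤ ENNReal.ofReal (C * x ^ s) := by
  have hlt : max 0 (1 - x) < 1 := max_lt one_pos (sub_lt_self 1 hx)
  have hgap : 1 - max 0 (1 - x) ≤ x := by linarith [le_max_right 0 (1 - x)]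
  have : 0 ≤ 1 - max 0 (1 - x) := sub_nonneg.mpr hlt.le
  refine (hν _ ⟨le_max_left 0 _, hlt⟩).trans ?_
  gcongr

theorem measure_le_inv_one_sub_add_le (hC : 0 ≤ C) (hs : 0 ≤ s) (hd : 0 < d)
    (hν : ∀ t ∈ Ico (0 : ℝ) 1, ν (Ico t 1) ≤ ENNReal.ofReal (C * (1 - t) ^ s)) {u : ℝ}
    (hu : 0 < u) :
    ν.restrict (Ico 0 1) {t | u ≤ (1 - t + d)⁻¹} ≤
      (Ioc 0 d⁻¹).indicator (fun u => ENNReal.ofReal (C * u⁻¹ ^ s)) u := by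
  rw [Measure.restrict_apply (measurableSet_le (by fun_prop) (by fun_prop))]
  have hlevel : ∀ t ∈ Ico (0 : ℝ) 1, u ≤ (1 - t + d)⁻¹ → 1 - t + d ≤ u⁻¹ := fun t ht hut =>
    (le_inv_comm₀ hu (by linarith [ht.2])).mp hut
  by_cases hud : u ≤ d⁻¹
  · rw [indicator_of_mem (show u ∈ Ioc 0 d⁻¹ from ⟨hu, hud⟩)]
    refine (measure_mono fun t ht => ?_).trans (measure_Ico_max_le hC hs hν (inv_pos.mpr hu))
    exact ⟨max_le ht.2.1 (by linarith [hlevel t ht.2 ht.1]), ht.2.2⟩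
  · rw [indicator_of_notMem fun h => hud h.2, nonpos_iff_eq_zero]
    refine measure_mono_null (t := ∅) (fun t ht => hud ?_) measure_empty
    exact (le_inv_comm₀ hd hu).mp (by linarith [hlevel t ht.2 ht.1, ht.2.2])

theorem lintegral_inv_one_sub_add_rpow_le (hC : 0 ≤ C) (hs : 0 ≤ s) (hp : s < p) (hd : 0 < d)
    (hν : ∀ t ∈ Ico (0 : ℝ) 1, ν (Ico t 1) ≤ ENNReal.ofReal (C * (1 - t) ^ s)) :
    ∫⁻ t in Ico 0 1, ENNReal.ofReal ((1 - t + d)⁻¹ ^ p) ∂ν ≤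
      ENNReal.ofReal (C * p / (p - s) * d⁻¹ ^ (p - s)) := by
  have hp₀ : 0 < p := hs.trans_lt hp
  have hps : 0 < p - s := sub_pos.mpr hp
  have hnonneg : 0 ≤ᵐ[ν.restrict (Ico 0 1)] fun t => (1 - t + d)⁻¹ := by
    filter_upwards [ae_restrict_mem measurableSet_Ico] with t ht
    exact inv_nonneg.mpr (by linarith [ht.2])
  rw [lintegral_rpow_eq_lintegral_meas_le_mul _ hnonneg (by fun_prop) hp₀]
  calc _ ≤ ENNReal.ofReal p * ∫⁻ u in Ioi 0, (Ioc 0 d⁻¹).indicator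
          (fun u => ENNReal.ofReal C * ENNReal.ofReal (u ^ (p - s - 1))) u := by
        gcongr _ * ?_
        refine setLIntegral_mono' measurableSet_Ioi fun u hu => ?_
        have hu₀ : 0 < u := hu
        refine (mul_le_mul_left (measure_le_inv_one_sub_add_le hC hs hd hν hu) _).trans_eq ?_
        by_cases hud : u ∈ Ioc 0 d⁻¹
        · rw [indicator_of_mem hud, indicator_of_mem hud, ← ENNReal.ofReal_mul (by positivity),
            ← ENNReal.ofReal_mul hC, sub_right_comm, Real.rpow_sub hu₀ (p - 1),
            Real.inv_rpow hu₀.le]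
          ring_nf
        · rw [indicator_of_notMem hud, indicator_of_notMem hud, zero_mul]
    _ = ENNReal.ofReal (C * p / (p - s) * d⁻¹ ^ (p - s)) := by
        rw [lintegral_indicator measurableSet_Ioc, Measure.restrict_restrict measurableSet_Ioc,
          inter_eq_left.mpr Ioc_subset_Ioi_self, lintegral_const_mul _ (by fun_prop),
          setLIntegral_Ioc_rpow_sub_one hps (by positivity), ← ENNReal.ofReal_mul hC,
          ← ENNReal.ofReal_mul hp₀.le]
        ring_nf

theorem one_sub_norm_le_norm_one_sub_mul {t : ℝ} (ht : t ∈ Icc (0 : ℝ) 1) (z : ℂ) :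
    1 - ‖z‖ ≤ ‖1 - t * z‖ := by
  have hnorm : ‖t * z‖ ≤ ‖z‖ := by
    rw [norm_mul, Complex.norm_real, Real.norm_of_nonneg ht.1]
    exact mul_le_of_le_one_left (norm_nonneg z) ht.2
  have htriangle := norm_sub_norm_le 1 (t * z)
  rw [norm_one] at htriangle
  linarith

theorem div_three_le_norm_one_sub_mul {t : ℝ} (ht : t ∈ Icc (0 : ℝ) 1) {z : ℂ} (hz : ‖z‖ ≤ 1) :
    (1 - t + ‖1 - z‖) / 3 ≤ ‖1 - t * z‖ := by
  have hnorm : ‖t * z‖ ≤ t := by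
    rw [norm_mul, Complex.norm_real, Real.norm_of_nonneg ht.1]
    exact mul_le_of_le_one_right ht.1 hz
  have hnorm' : ‖(1 - t : ℝ) * z‖ ≤ 1 - t := by
    rw [norm_mul, Complex.norm_real, Real.norm_of_nonneg (sub_nonneg.mpr ht.2)]
    exact mul_le_of_le_one_right (sub_nonneg.mpr ht.2) hz
  have hradial : 1 - t ≤ ‖1 - t * z‖ := by
    have htriangle := norm_sub_norm_le 1 (t * z)
    rw [norm_one] at htriangle
    linarith
  have hpole : ‖1 - z‖ ≤ ‖1 - t * z‖ + (1 - t) :=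
    calc ‖1 - z‖ = ‖(1 - t * z) - (1 - t : ℝ) * z‖ := by
          push_cast
          ring_nf
      _ ≤ ‖1 - t * z‖ + (1 - t) := (norm_sub_le _ _).trans (by gcongr)
  linarith

theorem lintegral_inv_norm_one_sub_mul_sq_le (hC : 0 ≤ C)
    (hν : ∀ t ∈ Ico (0 : ℝ) 1, ν (Ico t 1) ≤ ENNReal.ofReal (C * (1 - t))) {z : ℂ}
    (hz : ‖z‖ < 1) :
    ∫⁻ t in Ico 0 1, ENNReal.ofReal (‖1 - t * z‖ ^ 2)⁻¹ ∂ν ≤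
      ENNReal.ofReal (18 * C / ‖1 - z‖) := by
  have hz₁ : 0 < ‖1 - z‖ := by
    rw [norm_sub_pos_iff]
    rintro rfl
    simp at hz
  have hnu := lintegral_inv_one_sub_add_rpow_le hC zero_le_one one_lt_two hz₁ (by simpa using hν)
  calc ∫⁻ t in Ico 0 1, ENNReal.ofReal (‖1 - t * z‖ ^ 2)⁻¹ ∂ν
      ≤ ∫⁻ t in Ico 0 1, ENNReal.ofReal 9 * ENNReal.ofReal ((1 - t + ‖1 - z‖)⁻¹ ^ (2 : ℝ)) ∂ν := by
        refine setLIntegral_mono' measurableSet_Ico fun t ht => ?_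
        have ht' : 0 < 1 - t := sub_pos.mpr ht.2
        rw [← ENNReal.ofReal_mul (by norm_num), Real.rpow_two]
        refine ENNReal.ofReal_le_ofReal ?_
        calc (‖1 - t * z‖ ^ 2)⁻¹ ≤ (((1 - t + ‖1 - z‖) / 3) ^ 2)⁻¹ := by
              gcongr
              exact div_three_le_norm_one_sub_mul (Ico_subset_Icc_self ht) hz.le
          _ = 9 * (1 - t + ‖1 - z‖)⁻¹ ^ 2 := by
              field_simp
              norm_num
    _ ≤ ENNReal.ofReal 9 * ENNReal.ofReal (C * 2 / (2 - 1) * ‖1 - z‖⁻¹ ^ (2 - 1 : ℝ)) := by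
        rw [lintegral_const_mul _ (by fun_prop)]
        gcongr
    _ = ENNReal.ofReal (18 * C / ‖1 - z‖) := by
        rw [← ENNReal.ofReal_mul (by norm_num)]
        congr 1
        norm_num
        ring

theorem mom_nonneg (μ : Measure ℝ) (n : ℕ) : 0 ≤ mom μ n :=
  setIntegral_nonneg measurableSet_Ico fun _ ht => pow_nonneg ht.1 n

theorem measureReal_le_pow_le [IsFiniteMeasure μ]
    (h : ∀ t ∈ Ico (0 : ℝ) 1, (μ (Ico t 1)).toReal ≤ C * (1 - t) ^ (1 : ℝ)) {n : ℕ} (hn : n ≠ 0)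
    {u : ℝ} (hu : u ∈ Ioc (0 : ℝ) 1) :
    (μ.restrict (Ico 0 1)).real {t | u ≤ t ^ n} ≤ C * (1 - u ^ (n : ℝ)⁻¹) := by
  have hsub : {t | u ≤ t ^ n} ∩ Ico 0 1 ⊆ Ico (u ^ (n : ℝ)⁻¹) 1 := fun t ⟨hut, ht⟩ => by
    refine ⟨(Real.rpow_le_rpow hu.1.le hut (by positivity)).trans_eq ?_, ht.2⟩
    exact Real.pow_rpow_inv_natCast ht.1 hn
  rw [measureReal_restrict_apply (measurableSet_le (by fun_prop) (by fun_prop))]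
  refine (measureReal_mono hsub).trans ?_
  rcases hu.2.eq_or_lt with rfl | hu₁
  · simp
  · simpa [measureReal_def] using
      h _ ⟨Real.rpow_nonneg hu.1.le _, Real.rpow_lt_one hu.1.le hu₁ (by positivity)⟩

theorem IsCarleson.exists_mom_le [IsFiniteMeasure μ] (h : IsCarleson μ 1) :
    ∃ C > 0, ∀ n, mom μ n ≤ C / (n + 1) := by
  obtain ⟨C, hC, h⟩ := h
  refine ⟨C, hC, fun n => ?_⟩
  rcases Nat.eq_zero_or_pos n with rfl | hn
  · simpa [mom, measureReal_def] using h 0 (by simp)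
  have hinv : -1 < (n : ℝ)⁻¹ := neg_one_lt_zero.trans (by positivity)
  have hroot : IntervalIntegrable (fun u : ℝ => u ^ (n : ℝ)⁻¹) volume 0 1 :=
    intervalIntegral.intervalIntegrable_rpow' hinv
  have hint : IntegrableOn (fun t : ℝ => t ^ n) (Ico 0 1) μ :=
    ((continuous_pow n).integrableOn_Icc (b := 1)).mono_set Ico_subset_Icc_self
  have hnonneg : 0 ≤ᵐ[μ.restrict (Ico 0 1)] fun t => t ^ n :=
    (ae_restrict_mem measurableSet_Ico).mono fun t ht => pow_nonneg ht.1 n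
  have hle_one : (fun t : ℝ => t ^ n) ≤ᵐ[μ.restrict (Ico 0 1)] fun _ => 1 :=
    (ae_restrict_mem measurableSet_Ico).mono fun t ht => pow_le_one₀ ht.1 ht.2.le
  calc mom μ n = ∫ u in Ioc 0 1, (μ.restrict (Ico 0 1)).real {t | u ≤ t ^ n} :=
        hint.integral_eq_integral_Ioc_meas_le hnonneg hle_one
    _ ≤ ∫ u in (0 : ℝ)..1, C * (1 - u ^ (n : ℝ)⁻¹) := by
        rw [intervalIntegral.integral_of_le zero_le_one]
        refine integral_mono_of_nonneg (.of_forall fun u => measureReal_nonneg) ?_ ?_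
        · exact ((intervalIntegrable_const.sub hroot).const_mul C).1
        · exact (ae_restrict_mem measurableSet_Ioc).mono fun u hu =>
            measureReal_le_pow_le h hn.ne' hu
    _ = C / (n + 1) := by
        rw [intervalIntegral.integral_const_mul,
          intervalIntegral.integral_sub intervalIntegrable_const hroot, integral_rpow (Or.inl hinv),
          integral_one, Real.one_rpow, Real.zero_rpow (by positivity)]
        field_simp
        ring

end CarlesonIntegrals

/-! ### Taylor coefficients of Bloch functions -/

section TaylorCoefficients

variable {f : ℂ → ℂ} {β K : ℝ}

theorem hasSum_tc_mul_pow (hf : DifferentiableOn ℂ f (ball 0 1)) {z : ℂ} (hz : ‖z‖ < 1) :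
    HasSum (fun k => tc f k * z ^ k) (f z) := by
  refine (Complex.hasSum_taylorSeries_on_ball hf (mem_ball_zero_iff.2 hz)).congr_fun fun k => ?_
  simp only [tc, sub_zero, smul_eq_mul]
  ring

theorem sum_range_norm_coeff_sq_le {p : Polynomial ℂ} {B : ℝ}
    (hB : ∀ w : ℂ, ‖w‖ = 1 → ‖p.eval w‖ ≤ B) (n : ℕ) :
    ∑ k ∈ Finset.range n, ‖p.coeff k‖ ^ 2 ≤ B ^ 2 :=
  calc ∑ k ∈ Finset.range n, ‖p.coeff k‖ ^ 2
      = ∑ k ∈ Finset.range n ∩ p.support, ‖p.coeff k‖ ^ 2 :=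
        (Finset.sum_subset Finset.inter_subset_left fun k hk hk' => by simp_all).symm
    _ ≤ ∑ k ∈ p.support, ‖p.coeff k‖ ^ 2 :=
        Finset.sum_le_sum_of_subset_of_nonneg Finset.inter_subset_right fun _ _ _ => by positivity
    _ = Real.circleAverage (fun w => ‖p.eval w‖ ^ 2) 0 1 :=
        p.sum_sq_norm_coeff_eq_circleAverage
    _ ≤ B ^ 2 := by
        refine Real.circleAverage_mono_on_of_le_circle
          (ContinuousOn.circleIntegrable zero_le_one (by fun_prop)) fun w hw => ?_
        gcongr
        exact hB w (by simpa using hw)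

theorem sum_range_norm_sq_le_of_norm_tsum_le {a : ℕ → ℂ} (ha : Summable fun k => ‖a k‖) {B : ℝ}
    (hB : ∀ w : ℂ, ‖w‖ = 1 → ‖∑' k, a k * w ^ k‖ ≤ B) (n : ℕ) :
    ∑ k ∈ Finset.range n, ‖a k‖ ^ 2 ≤ B ^ 2 := by
  set ε : ℕ → ℝ := fun N => ∑' k, ‖a (k + N)‖
  have hε : Filter.Tendsto (fun N => (B + ε N) ^ 2) Filter.atTop (nhds (B ^ 2)) := by
    simpa using ((tendsto_sum_nat_add fun k => ‖a k‖).const_add B).pow 2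
  refine ge_of_tendsto hε (Filter.eventually_atTop.2 ⟨n, fun N hN => ?_⟩)
  set p : Polynomial ℂ := ∑ k ∈ Finset.range N, Polynomial.monomial k (a k)
  have hcoeff (k : ℕ) (hk : k ∈ Finset.range n) : p.coeff k = a k := by
    simp [p, Polynomial.coeff_monomial, (Finset.mem_range.1 hk).trans_le hN]
  have heval (w : ℂ) (hw : ‖w‖ = 1) : ‖p.eval w‖ ≤ B + ε N := by
    have hnorm (k : ℕ) : ‖a k * w ^ k‖ = ‖a k‖ := by simp [hw]
    have hs : Summable fun k => ‖a k * w ^ k‖ := by simpa only [hnorm] using ha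
    have htail : ‖∑' k, a (k + N) * w ^ (k + N)‖ ≤ ε N := by
      simpa only [hnorm] using norm_tsum_le_tsum_norm
        ((summable_nat_add_iff (f := fun k => ‖a k * w ^ k‖) N).2 hs)
    calc ‖p.eval w‖ = ‖∑' k, a k * w ^ k - ∑' k, a (k + N) * w ^ (k + N)‖ := by
          rw [← hs.of_norm.sum_add_tsum_nat_add N, add_sub_cancel_right]
          simp [p, Polynomial.eval_finsetSum]
      _ ≤ B + ε N := (norm_sub_le _ _).trans (add_le_add (hB w hw) htail)
  refine (Finset.sum_congr rfl fun k hk => ?_).trans_le (sum_range_norm_coeff_sq_le heval n)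
  rw [hcoeff k hk]

theorem sum_range_norm_tc_mul_pow_sq_le (hf : DifferentiableOn ℂ f (ball 0 1)) {r B : ℝ}
    (hr : r ∈ Ico (0 : ℝ) 1) (hB : ∀ z, ‖z‖ = r → ‖f z‖ ≤ B) (n : ℕ) :
    ∑ k ∈ Finset.range n, (‖tc f k‖ * r ^ k) ^ 2 ≤ B ^ 2 := by
  have hnorm (w : ℂ) (hw : ‖w‖ = 1) : ‖(r : ℂ) * w‖ = r := by simp [hw, abs_of_nonneg hr.1]
  have hcoeff (k : ℕ) : ‖tc f k * (r : ℂ) ^ k‖ = ‖tc f k‖ * r ^ k := by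
    simp [abs_of_nonneg hr.1]
  have hsum (w : ℂ) (hw : ‖w‖ = 1) :
      HasSum (fun k => tc f k * (r : ℂ) ^ k * w ^ k) (f (r * w)) := by
    simpa only [mul_pow, mul_assoc] using hasSum_tc_mul_pow hf ((hnorm w hw).trans_lt hr.2)
  have hs : Summable fun k => ‖tc f k * (r : ℂ) ^ k‖ := by
    simpa using (hsum 1 (by simp)).summable.norm
  simpa only [hcoeff] using sum_range_norm_sq_le_of_norm_tsum_le hs
    (fun w hw => by simpa only [(hsum w hw).tsum_eq] using hB _ (hnorm w hw)) n

theorem one_le_three_mul_div_pow {k n : ℕ} (hkn : k ≤ n) : 1 ≤ 3 * ((n : ℝ) / (n + 1)) ^ k := by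
  rcases n.eq_zero_or_pos with rfl | hn
  · simp [Nat.le_zero.1 hkn]
  have hn' : (0 : ℝ) < n := by exact_mod_cast hn
  have hle : (1 + (n : ℝ)⁻¹) ^ k ≤ 3 :=
    calc (1 + (n : ℝ)⁻¹) ^ k ≤ (1 + (n : ℝ)⁻¹) ^ n :=
          pow_le_pow_right₀ (by linarith [inv_pos.2 hn']) hkn
      _ ≤ Real.exp 1 := Real.one_add_inv_pow_le_exp
      _ ≤ 3 := by linarith [Real.exp_one_lt_d9]
  have hinv : (n : ℝ) / (n + 1) = (1 + (n : ℝ)⁻¹)⁻¹ := by field_simp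
  rwa [hinv, inv_pow, ← div_eq_mul_inv, one_le_div (by positivity)]

-- Cauchy–Schwarz and Parseval's identity on the circle of radius `n / (n + 1)`.
theorem sum_range_norm_tc_le (hf : DifferentiableOn ℂ f (ball 0 1))
    (hK : ∀ z : ℂ, ‖z‖ < 1 → ‖f z‖ ≤ K * (1 - ‖z‖) ^ (-β)) (n : ℕ) :
    ∑ k ∈ Finset.range (n + 1), ‖tc f k‖ ≤ 3 * K * (n + 1) ^ (β + 1 / 2) := by
  have hK0 : 0 ≤ K := by simpa using (norm_nonneg _).trans (hK 0 (by simp))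
  have hn : (0 : ℝ) < n + 1 := by positivity
  have hr : (n : ℝ) / (n + 1) ∈ Ico (0 : ℝ) 1 := ⟨by positivity, by rw [div_lt_one hn]; linarith⟩
  have hB (z : ℂ) (hz : ‖z‖ = n / (n + 1)) : ‖f z‖ ≤ K * (n + 1) ^ β := by
    have hsub : 1 - (n : ℝ) / (n + 1) = (n + 1 : ℝ)⁻¹ := by field_simp; ring
    simpa only [hz, hsub, Real.inv_rpow hn.le, Real.rpow_neg hn.le, inv_inv] using
      hK z (hz.trans_lt hr.2)
  refine le_of_sq_le_sq ?_ (by positivity)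
  calc (∑ k ∈ Finset.range (n + 1), ‖tc f k‖) ^ 2
      ≤ (n + 1) * ∑ k ∈ Finset.range (n + 1), ‖tc f k‖ ^ 2 := by
        simpa using sq_sum_le_card_mul_sum_sq (s := Finset.range (n + 1)) (f := fun k => ‖tc f k‖)
    _ ≤ (n + 1) * ∑ k ∈ Finset.range (n + 1), 9 * (‖tc f k‖ * (n / (n + 1)) ^ k) ^ 2 := by
        gcongr with k hk
        have := one_le_three_mul_div_pow (Nat.lt_succ_iff.1 (Finset.mem_range.1 hk))
        calc ‖tc f k‖ ^ 2 ≤ (‖tc f k‖ * (3 * ((n : ℝ) / (n + 1)) ^ k)) ^ 2 := by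
              gcongr
              exact le_mul_of_one_le_right (norm_nonneg _) this
          _ = 9 * (‖tc f k‖ * ((n : ℝ) / (n + 1)) ^ k) ^ 2 := by ring
    _ ≤ (n + 1) * (9 * (K * (n + 1) ^ β) ^ 2) := by
        rw [← Finset.mul_sum]
        gcongr
        exact sum_range_norm_tc_mul_pow_sq_le hf hr hB _
    _ = (3 * K * (n + 1) ^ (β + 1 / 2)) ^ 2 := by
        rw [Real.rpow_add hn, ← Real.sqrt_eq_rpow]
        simp only [mul_pow, Real.sq_sqrt hn.le]
        ring

theorem summable_norm_tc_div (hf : DifferentiableOn ℂ f (ball 0 1)) (hβ : 0 ≤ β) (hβ' : β < 1 / 2)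
    (hK : ∀ z : ℂ, ‖z‖ < 1 → ‖f z‖ ≤ K * (1 - ‖z‖) ^ (-β)) :
    Summable fun k : ℕ => ‖tc f k‖ / k := by
  have hK0 : 0 ≤ K := by simpa using (norm_nonneg _).trans (hK 0 (by simp))
  have hO : (fun n : ℕ => ∑ k ∈ Finset.Icc 1 n, ‖tc f k‖) =O[Filter.atTop]
      fun n : ℕ => (n : ℝ) ^ (β + 1 / 2) := by
    refine Asymptotics.IsBigO.of_bound (3 * K * 2 ^ (β + 1 / 2))
      (Filter.eventually_atTop.2 ⟨1, fun n hn => ?_⟩)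
    have hn' : (1 : ℝ) ≤ n := by exact_mod_cast hn
    rw [Real.norm_of_nonneg (Finset.sum_nonneg fun _ _ => norm_nonneg _),
      Real.norm_of_nonneg (by positivity)]
    calc ∑ k ∈ Finset.Icc 1 n, ‖tc f k‖ ≤ ∑ k ∈ Finset.range (n + 1), ‖tc f k‖ :=
          Finset.sum_le_sum_of_subset_of_nonneg
            (fun k hk => Finset.mem_range.2 (Nat.lt_succ_of_le (Finset.mem_Icc.1 hk).2))
            fun _ _ _ => norm_nonneg _
      _ ≤ 3 * K * (n + 1) ^ (β + 1 / 2) := sum_range_norm_tc_le hf hK n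
      _ ≤ 3 * K * (2 * n) ^ (β + 1 / 2) := by gcongr; linarith
      _ = 3 * K * 2 ^ (β + 1 / 2) * n ^ (β + 1 / 2) := by
          rw [Real.mul_rpow zero_le_two (by positivity)]
          ring
  have hL : LSeriesSummable (tc f) 1 :=
    LSeriesSummable_of_sum_norm_bigO hO (by positivity) (by simp only [Complex.one_re]; linarith)
  refine hL.norm.congr fun k => ?_
  rcases k.eq_zero_or_pos with rfl | hk
  · simp
  · simp [LSeries.term_of_ne_zero hk.ne']

theorem summable_norm_tc_div_of_norm_le_log (hf : DifferentiableOn ℂ f (ball 0 1))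
    (hK : ∀ z : ℂ, ‖z‖ < 1 → ‖f z‖ ≤ K * Real.log (2 / (1 - ‖z‖))) :
    Summable fun k : ℕ => ‖tc f k‖ / k := by
  have hK0 : 0 ≤ K := nonneg_of_mul_nonneg_left
    (by simpa using (norm_nonneg _).trans (hK 0 (by simp))) (Real.log_pos one_lt_two)
  refine summable_norm_tc_div (β := 1 / 4) (K := K * (2 ^ (1 / 4 : ℝ) / (1 / 4))) hf (by norm_num)
    (by norm_num) fun z hz => (hK z hz).trans ?_
  have hz' : 0 < 1 - ‖z‖ := sub_pos.2 hz
  calc K * Real.log (2 / (1 - ‖z‖)) ≤ K * ((2 / (1 - ‖z‖)) ^ (1 / 4 : ℝ) / (1 / 4)) := by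
        gcongr _ * ?_
        exact Real.log_le_rpow_div (by positivity) (by norm_num)
    _ = K * (2 ^ (1 / 4 : ℝ) / (1 / 4)) * (1 - ‖z‖) ^ (-(1 / 4) : ℝ) := by
        rw [Real.div_rpow zero_le_two hz'.le, Real.rpow_neg hz'.le]
        ring

theorem IsCarleson.summable_mom_mul_norm_tc {μ : Measure ℝ} [IsFiniteMeasure μ]
    (hμ : IsCarleson μ 1) (hf : DifferentiableOn ℂ f (ball 0 1))
    (hK : ∀ z : ℂ, ‖z‖ < 1 → ‖f z‖ ≤ K * Real.log (2 / (1 - ‖z‖))) :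
    Summable fun k => mom μ k * ‖tc f k‖ := by
  obtain ⟨C, hC, hmom⟩ := hμ.exists_mom_le
  refine ((summable_norm_tc_div_of_norm_le_log hf hK).mul_left C).of_norm_bounded_eventually_nat
    (Filter.eventually_atTop.2 ⟨1, fun k hk => ?_⟩)
  have : (0 : ℝ) < k := by exact_mod_cast hk
  rw [Real.norm_of_nonneg (mul_nonneg (mom_nonneg μ k) (norm_nonneg _))]
  calc mom μ k * ‖tc f k‖ ≤ C / k * ‖tc f k‖ := by
        gcongr
        exact (hmom k).trans (by gcongr; linarith)
    _ = C * (‖tc f k‖ / k) := by ring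

end TaylorCoefficients

/-! ### The Hankel operator as an integral operator -/

section HankelEqualsIntegral

variable {μ : Measure ℝ} {f : ℂ → ℂ} {z : ℂ}

theorem integrable_of_hasSum_of_summable_integral_norm {α E : Type*} [MeasurableSpace α]
    [NormedAddCommGroup E] {ν : Measure α} {F : ℕ → α → E} {g : α → E}
    (hF : ∀ i, Integrable (F i) ν) (hs : Summable fun i => ∫ a, ‖F i a‖ ∂ν)
    (hg : ∀ᵐ a ∂ν, HasSum (F · a) (g a)) : Integrable g ν := by
  refine ⟨aestronglyMeasurable_of_tendsto_ae Filter.atTop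
    (fun n => Finset.aestronglyMeasurable_fun_sum (Finset.range n) fun i _ => (hF i).1)
    (hg.mono fun a ha => ha.tendsto_sum_nat), ?_⟩
  calc ∫⁻ a, ‖g a‖ₑ ∂ν ≤ ∫⁻ a, ∑' i, ‖F i a‖ₑ ∂ν :=
        lintegral_mono_ae (hg.mono fun a ha => ha.tsum_eq ▸ enorm_tsum_le_tsum_enorm)
    _ = ∑' i, ENNReal.ofReal (∫ a, ‖F i a‖ ∂ν) := by
        rw [lintegral_tsum fun i => (hF i).1.enorm]
        simp_rw [ofReal_integral_norm_eq_lintegral_enorm (hF _)]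
    _ < ⊤ := hs.tsum_ofReal_lt_top

theorem hasSum_integral_of_hasSum_of_summable_integral_norm {α E : Type*} [MeasurableSpace α]
    [NormedAddCommGroup E] [NormedSpace ℝ E] {ν : Measure α} {F : ℕ → α → E} {g : α → E}
    (hF : ∀ i, Integrable (F i) ν) (hs : Summable fun i => ∫ a, ‖F i a‖ ∂ν)
    (hg : ∀ᵐ a ∂ν, HasSum (F · a) (g a)) : HasSum (fun i => ∫ a, F i a ∂ν) (∫ a, g a ∂ν) := by
  rw [← integral_congr_ae (hg.mono fun a ha => ha.tsum_eq)]
  exact hasSum_integral_of_summable_integral_norm hF hs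

theorem norm_ofReal_lt_one {t : ℝ} (ht : t ∈ Ico (0 : ℝ) 1) : ‖(t : ℂ)‖ < 1 := by
  rw [Complex.norm_real, Real.norm_of_nonneg ht.1]
  exact ht.2

theorem integrableOn_ofReal_pow [IsFiniteMeasure μ] (n : ℕ) :
    IntegrableOn (fun t : ℝ => (t : ℂ) ^ n) (Ico 0 1) μ :=
  Integrable.of_bound (by fun_prop) 1 ((ae_restrict_mem measurableSet_Ico).mono fun t ht => by
    rw [norm_pow]
    exact pow_le_one₀ (norm_nonneg _) (norm_ofReal_lt_one ht).le)

theorem integral_ofReal_pow (μ : Measure ℝ) (n : ℕ) :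
    ∫ t in Ico (0 : ℝ) 1, (t : ℂ) ^ n ∂μ = mom μ n := by
  simp only [← Complex.ofReal_pow, mom]
  exact integral_complex_ofReal

theorem integral_norm_ofReal_pow (μ : Measure ℝ) (n : ℕ) :
    ∫ t in Ico (0 : ℝ) 1, ‖(t : ℂ) ^ n‖ ∂μ = mom μ n :=
  setIntegral_congr_fun measurableSet_Ico fun t ht => by simp [abs_of_nonneg ht.1]

theorem mom_antitone [IsFiniteMeasure μ] : Antitone (mom μ) := fun m n hmn => by
  rw [← integral_norm_ofReal_pow, ← integral_norm_ofReal_pow]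
  refine setIntegral_mono_on (integrableOn_ofReal_pow n).norm (integrableOn_ofReal_pow m).norm
    measurableSet_Ico fun t ht => ?_
  simp only [norm_pow]
  exact pow_le_pow_of_le_one (norm_nonneg _) (norm_ofReal_lt_one ht).le hmn

theorem summable_mom_add_mul_norm_tc [IsFiniteMeasure μ]
    (hS : Summable fun k => mom μ k * ‖tc f k‖) (n : ℕ) :
    Summable fun k => mom μ (n + k) * ‖tc f k‖ :=
  hS.of_nonneg_of_le (fun _ => mul_nonneg (mom_nonneg μ _) (norm_nonneg _)) fun k =>
    mul_le_mul_of_nonneg_right (mom_antitone (Nat.le_add_left k n)) (norm_nonneg _)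

theorem norm_mom_mul_tc (μ : Measure ℝ) (f : ℂ → ℂ) (m k : ℕ) :
    ‖(mom μ m : ℂ) * tc f k‖ = mom μ m * ‖tc f k‖ := by
  rw [norm_mul, Complex.norm_real, Real.norm_of_nonneg (mom_nonneg μ m)]

theorem summable_integral_norm_pow_mul_tc [IsFiniteMeasure μ]
    (hS : Summable fun k => mom μ k * ‖tc f k‖) (n : ℕ) :
    Summable fun k => ∫ t in Ico (0 : ℝ) 1, ‖(t : ℂ) ^ (n + k) * tc f k‖ ∂μ := by
  simpa only [norm_mul, integral_mul_const, integral_norm_ofReal_pow] using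
    summable_mom_add_mul_norm_tc hS n

theorem ae_hasSum_pow_mul_tc (μ : Measure ℝ) (hf : DifferentiableOn ℂ f (ball 0 1)) (n : ℕ) :
    ∀ᵐ t : ℝ ∂μ.restrict (Ico (0 : ℝ) 1),
      HasSum (fun k => (t : ℂ) ^ (n + k) * tc f k) ((t : ℂ) ^ n * f t) :=
  (ae_restrict_mem measurableSet_Ico).mono fun t ht => by
    simpa only [pow_add, mul_assoc, mul_comm (tc f _)] using
      (hasSum_tc_mul_pow hf (norm_ofReal_lt_one ht)).mul_left ((t : ℂ) ^ n)

theorem integrableOn_pow_mul_of_summable_mom [IsFiniteMeasure μ]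
    (hf : DifferentiableOn ℂ f (ball 0 1)) (hS : Summable fun k => mom μ k * ‖tc f k‖) (n : ℕ) :
    IntegrableOn (fun t : ℝ => (t : ℂ) ^ n * f t) (Ico 0 1) μ :=
  integrable_of_hasSum_of_summable_integral_norm
    (fun k => (integrableOn_ofReal_pow (n + k)).mul_const _)
    (summable_integral_norm_pow_mul_tc hS n) (ae_hasSum_pow_mul_tc μ hf n)

theorem integrableOn_of_summable_mom [IsFiniteMeasure μ]
    (hf : DifferentiableOn ℂ f (ball 0 1)) (hS : Summable fun k => mom μ k * ‖tc f k‖) :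
    IntegrableOn (fun t : ℝ => f t) (Ico 0 1) μ := by
  simpa only [pow_zero, one_mul] using integrableOn_pow_mul_of_summable_mom hf hS 0

theorem hmuCoeff_eq_integral [IsFiniteMeasure μ]
    (hf : DifferentiableOn ℂ f (ball 0 1)) (hS : Summable fun k => mom μ k * ‖tc f k‖) (n : ℕ) :
    hmuCoeff μ f n = ∫ t in Ico (0 : ℝ) 1, (t : ℂ) ^ n * f t ∂μ := by
  have h := hasSum_integral_of_hasSum_of_summable_integral_norm
    (fun k => (integrableOn_ofReal_pow (n + k)).mul_const _)
    (summable_integral_norm_pow_mul_tc hS n) (ae_hasSum_pow_mul_tc μ hf n)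
  simpa only [hmuCoeff, integral_mul_const, integral_ofReal_pow] using h.tsum_eq

theorem summable_integral_norm_pow_mul_mul_pow [IsFiniteMeasure μ]
    (hf : DifferentiableOn ℂ f (ball 0 1)) (hS : Summable fun k => mom μ k * ‖tc f k‖)
    (hz : ‖z‖ < 1) :
    Summable fun n : ℕ => ∫ t in Ico (0 : ℝ) 1, ‖(t : ℂ) ^ n * f t * z ^ n‖ ∂μ := by
  refine ((summable_geometric_of_lt_one (norm_nonneg z) hz).mul_left
    (∫ t in Ico (0 : ℝ) 1, ‖f t‖ ∂μ)).of_nonneg_of_le (fun n => by positivity) fun n => ?_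
  simp only [norm_mul, integral_mul_const, norm_pow]
  gcongr ?_ * _
  have hint : IntegrableOn (fun t : ℝ => ‖(t : ℂ)‖ ^ n * ‖f t‖) (Ico 0 1) μ := by
    simpa only [IntegrableOn, norm_mul, norm_pow] using
      (integrableOn_pow_mul_of_summable_mom hf hS n).norm
  exact setIntegral_mono_on hint (integrableOn_of_summable_mom hf hS).norm measurableSet_Ico
    fun t ht => mul_le_of_le_one_left (norm_nonneg _)
      (pow_le_one₀ (norm_nonneg _) (norm_ofReal_lt_one ht).le)

theorem hmuWD_of_summable_mom [IsFiniteMeasure μ]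
    (hf : DifferentiableOn ℂ f (ball 0 1)) (hS : Summable fun k => mom μ k * ‖tc f k‖) :
    HmuWD μ f := by
  refine ⟨fun n => ?_, fun z hz => ?_⟩
  · simpa only [norm_mom_mul_tc] using summable_mom_add_mul_norm_tc hS n
  · refine (summable_integral_norm_pow_mul_mul_pow hf hS
      (mem_ball_zero_iff.1 hz)).of_nonneg_of_le (fun _ => norm_nonneg _) fun n => ?_
    rw [hmuCoeff_eq_integral hf hS, ← integral_mul_const]
    exact norm_integral_le_integral_norm _

theorem hmu_eqOn_imu_of_summable_mom [IsFiniteMeasure μ]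
    (hf : DifferentiableOn ℂ f (ball 0 1)) (hS : Summable fun k => mom μ k * ‖tc f k‖) :
    EqOn (Hmu μ f) (Imu μ f) (ball 0 1) := fun z hz => by
  rw [mem_ball_zero_iff] at hz
  have hgeom : ∀ᵐ t : ℝ ∂μ.restrict (Ico (0 : ℝ) 1),
      HasSum (fun n : ℕ => (t : ℂ) ^ n * f t * z ^ n) (f t / (1 - t * z)) := by
    filter_upwards [ae_restrict_mem measurableSet_Ico] with t ht
    have htz : ‖(t : ℂ) * z‖ < 1 := by
      rw [norm_mul]
      exact mul_lt_one_of_nonneg_of_lt_one_left (norm_nonneg _) (norm_ofReal_lt_one ht) hz.le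
    simpa only [div_eq_mul_inv, mul_pow, mul_left_comm, mul_assoc] using
      (hasSum_geometric_of_norm_lt_one htz).mul_left (f t)
  have h := hasSum_integral_of_hasSum_of_summable_integral_norm
    (fun n => (integrableOn_pow_mul_of_summable_mom hf hS n).mul_const _)
    (summable_integral_norm_pow_mul_mul_pow hf hS hz) hgeom
  simpa only [Hmu, Imu, integral_mul_const, ← hmuCoeff_eq_integral hf hS] using h.tsum_eq

end HankelEqualsIntegral

/-! ### The integral operator -/

section IntegralOperator

variable {μ : Measure ℝ} {f : ℂ → ℂ} {z : ℂ}

theorem qsInt_congr {g : ℂ → ℂ} (h : EqOn f g (ball 0 1)) (s : ℝ) : qsInt s f = qsInt s g := by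
  ext a
  unfold qsInt
  congr 1
  refine setLIntegral_congr_fun measurableSet_ball fun z hz => ?_
  simp only [h.deriv isOpen_ball hz]

theorem memQs_congr {g : ℂ → ℂ} (h : EqOn f g (ball 0 1)) {s : ℝ} : MemQs s f ↔ MemQs s g := by
  rw [MemQs, MemQs, qsInt_congr h, differentiableOn_congr h]

theorem qsNorm_congr {g : ℂ → ℂ} (h : EqOn f g (ball 0 1)) (s : ℝ) :
    qsNorm s f = qsNorm s g := by
  rw [qsNorm, qsNorm, qsInt_congr h, h (mem_ball_self one_pos)]

theorem integrableOn_div_one_sub_mul_pow {g : ℝ → ℂ} (hg : IntegrableOn g (Ico 0 1) μ)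
    (hz : ‖z‖ < 1) (n : ℕ) :
    IntegrableOn (fun t : ℝ => g t / (1 - t * z) ^ n) (Ico 0 1) μ := by
  have : 0 < 1 - ‖z‖ := sub_pos.2 hz
  have hmeas : AEStronglyMeasurable (fun t : ℝ => ((1 - (t : ℂ) * z) ^ n)⁻¹)
      (μ.restrict (Ico 0 1)) := (by fun_prop : Measurable _).aestronglyMeasurable
  refine Integrable.mono' (hg.norm.div_const ((1 - ‖z‖) ^ n)) ?_ ?_
  · simpa only [div_eq_mul_inv] using hg.aestronglyMeasurable.fun_mul hmeas
  · filter_upwards [ae_restrict_mem measurableSet_Ico] with t ht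
    rw [norm_div, norm_pow]
    gcongr
    exact one_sub_norm_le_norm_one_sub_mul (Ico_subset_Icc_self ht) z

theorem imuWD_of_integrableOn (hf : IntegrableOn (fun t : ℝ => f t) (Ico 0 1) μ) :
    ImuWD μ f := fun z hz => by
  simpa only [pow_one] using integrableOn_div_one_sub_mul_pow hf (mem_ball_zero_iff.1 hz) 1

theorem hasDerivAt_div_one_sub_mul {a t : ℂ} (h : 1 - t * z ≠ 0) :
    HasDerivAt (fun w => a / (1 - t * w)) (a * t / (1 - t * z) ^ 2) z := by
  have hden : HasDerivAt (fun w => 1 - t * w) (-t) z := by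
    simpa using ((hasDerivAt_id z).const_mul t).const_sub 1
  exact ((hasDerivAt_const z a).fun_div hden h).congr_deriv (by ring)

theorem hasDerivAt_imu (hf : IntegrableOn (fun t : ℝ => f t) (Ico 0 1) μ) (hz : ‖z‖ < 1) :
    HasDerivAt (Imu μ f) (∫ t in Ico (0 : ℝ) 1, f t * t / (1 - t * z) ^ 2 ∂μ) z := by
  set ε := (1 - ‖z‖) / 2
  have hε : 0 < ε := half_pos (sub_pos.2 hz)
  have hball {w : ℂ} (hw : w ∈ ball z ε) : ε ≤ 1 - ‖w‖ := by
    have := norm_sub_norm_le w z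
    rw [mem_ball, dist_eq_norm] at hw
    linarith [show ε = (1 - ‖z‖) / 2 from rfl]
  have hden {w : ℂ} (hw : w ∈ ball z ε) {t : ℝ} (ht : t ∈ Ico (0 : ℝ) 1) :
      ε ≤ ‖1 - (t : ℂ) * w‖ :=
    (hball hw).trans (one_sub_norm_le_norm_one_sub_mul (Ico_subset_Icc_self ht) w)
  have hint {w : ℂ} (hw : ‖w‖ < 1) :
      IntegrableOn (fun t : ℝ => f t / (1 - t * w)) (Ico 0 1) μ := by
    simpa only [pow_one] using integrableOn_div_one_sub_mul_pow hf hw 1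
  refine (hasDerivAt_integral_of_dominated_loc_of_deriv_le
    (F := fun w (t : ℝ) => f t / (1 - t * w)) (F' := fun w (t : ℝ) => f t * t / (1 - t * w) ^ 2)
    (bound := fun t : ℝ => ‖f t‖ / ε ^ 2) (ball_mem_nhds z hε) ?_ (hint hz) ?_ ?_
    (hf.norm.div_const _) ?_).2
  · filter_upwards [ball_mem_nhds z hε] with w hw
    exact (hint (by linarith [hball hw])).aestronglyMeasurable
  · simp_rw [div_eq_mul_inv]
    exact (hf.aestronglyMeasurable.mul (by fun_prop)).mul
      (by fun_prop : Measurable fun t : ℝ => ((1 - (t : ℂ) * z) ^ 2)⁻¹).aestronglyMeasurable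
  · filter_upwards [ae_restrict_mem measurableSet_Ico] with t ht w hw
    rw [norm_div, norm_pow, norm_mul]
    gcongr
    · exact mul_le_of_le_one_right (norm_nonneg _) (norm_ofReal_lt_one ht).le
    · exact hden hw ht
  · filter_upwards [ae_restrict_mem measurableSet_Ico] with t ht w hw
    exact hasDerivAt_div_one_sub_mul (norm_pos_iff.1 (hε.trans_le (hden hw ht)))

theorem norm_deriv_imu_le (hf : IntegrableOn (fun t : ℝ => f t) (Ico 0 1) μ) (hz : ‖z‖ < 1)
    {B : ℝ} (hB : 0 ≤ B)
    (h : ∫⁻ t in Ico (0 : ℝ) 1, ‖f t / (1 - t * z) ^ 2‖ₑ ∂μ ≤ ENNReal.ofReal B) :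
    ‖deriv (Imu μ f) z‖ ≤ B := by
  rw [(hasDerivAt_imu hf hz).deriv]
  refine (norm_integral_le_lintegral_norm _).trans (ENNReal.toReal_le_of_le_ofReal hB ?_)
  refine (setLIntegral_mono' measurableSet_Ico fun t ht => ?_).trans h
  rw [ofReal_norm, mul_div_right_comm, enorm_mul]
  refine mul_le_of_le_one_right' ?_
  rw [← ofReal_norm, ← ENNReal.ofReal_one]
  exact ENNReal.ofReal_le_ofReal (norm_ofReal_lt_one ht).le

-- The growth of `f` cancels the logarithm in the Carleson condition: the measure
-- `log (2 / (1 - t)) dμ(t)` is an ordinary `1`-Carleson measure.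
theorem IsLogCarleson.exists_lintegral_div_sq_le [IsFiniteMeasure μ] (h : IsLogCarleson μ 1 1) :
    ∃ C > 0, ∀ K ≥ 0, ∀ g : ℝ → ℂ,
      (∀ t ∈ Ico (0 : ℝ) 1, ‖g t‖ ≤ K * Real.log (2 / (1 - t))) → ∀ z : ℂ, ‖z‖ < 1 →
        ∫⁻ t in Ico 0 1, ‖g t / (1 - t * z) ^ 2‖ₑ ∂μ ≤ ENNReal.ofReal (C * K / ‖1 - z‖) := by
  obtain ⟨C, hC, hν⟩ := h.exists_logWeighted_Ico_le one_pos one_pos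
  simp only [Real.rpow_one] at hν
  refine ⟨18 * C, by positivity, fun K hK g hg z hz => ?_⟩
  set k : ℝ → ℝ≥0∞ := fun t => ENNReal.ofReal (‖1 - (t : ℂ) * z‖ ^ 2)⁻¹
  calc ∫⁻ t in Ico 0 1, ‖g t / (1 - t * z) ^ 2‖ₑ ∂μ
      ≤ ∫⁻ t in Ico 0 1, ENNReal.ofReal K *
          (ENNReal.ofReal (Real.log (2 / (1 - t)) ^ (1 : ℝ)) * k t) ∂μ := by
        refine setLIntegral_mono' measurableSet_Ico fun t ht => ?_
        have hlog := (log_two_div_one_sub_pos ht).le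
        rw [Real.rpow_one, ← ENNReal.ofReal_mul hlog, ← ENNReal.ofReal_mul hK, ← ofReal_norm,
          norm_div, norm_pow, div_eq_mul_inv, ← mul_assoc]
        gcongr
        exact hg t ht
    _ = ENNReal.ofReal K * ∫⁻ t in Ico 0 1, k t ∂logWeighted μ 1 := by
        rw [lintegral_const_mul' _ _ ENNReal.ofReal_ne_top,
          setLIntegral_logWeighted (by fun_prop) measurableSet_Ico subset_rfl]
    _ ≤ ENNReal.ofReal K * ENNReal.ofReal (18 * C / ‖1 - z‖) := by
        gcongr
        exact lintegral_inv_norm_one_sub_mul_sq_le hC.le hν hz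
    _ = ENNReal.ofReal (18 * C * K / ‖1 - z‖) := by
        rw [← ENNReal.ofReal_mul hK]
        congr 1
        ring

theorem IsLogCarleson.exists_imu_bounds [IsFiniteMeasure μ] (h : IsLogCarleson μ 1 1) :
    ∃ C > 0, ∀ K ≥ 0, ∀ f : ℂ → ℂ, ContinuousOn f (ball 0 1) →
      (∀ z : ℂ, ‖z‖ < 1 → ‖f z‖ ≤ K * Real.log (2 / (1 - ‖z‖))) →
        IntegrableOn (fun t : ℝ => f t) (Ico 0 1) μ ∧ ‖Imu μ f 0‖ ≤ C * K ∧
        ∀ z ∈ ball (0 : ℂ) 1, ‖deriv (Imu μ f) z‖ ≤ C * K / ‖1 - z‖ := by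
  obtain ⟨C, hC, hker⟩ := h.exists_lintegral_div_sq_le
  refine ⟨C, hC, fun K hK f hf hgrowth => ?_⟩
  have hker' (z : ℂ) (hz : ‖z‖ < 1) := hker K hK (fun t => f t) (fun t ht => by
    simpa [abs_of_nonneg ht.1] using hgrowth t (norm_ofReal_lt_one ht)) z hz
  have hzero : ∫⁻ t in Ico (0 : ℝ) 1, ‖f t‖ₑ ∂μ ≤ ENNReal.ofReal (C * K) := by
    simpa using hker' 0 (by simp)
  have hmeas : AEStronglyMeasurable (fun t : ℝ => f t) (μ.restrict (Ico 0 1)) :=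
    (hf.comp Complex.continuous_ofReal.continuousOn fun t ht =>
      mem_ball_zero_iff.2 (norm_ofReal_lt_one ht)).aestronglyMeasurable measurableSet_Ico
  have hint : IntegrableOn (fun t : ℝ => f t) (Ico 0 1) μ :=
    ⟨hmeas, hzero.trans_lt ENNReal.ofReal_lt_top⟩
  refine ⟨hint, ?_, fun z hz => ?_⟩
  · refine (norm_integral_le_lintegral_norm _).trans
      (ENNReal.toReal_le_of_le_ofReal (by positivity) ?_)
    simpa using hzero
  · rw [mem_ball_zero_iff] at hz
    exact norm_deriv_imu_le hint hz (by positivity) (hker' z hz)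

theorem IsLogCarleson.exists_qsNorm_imu_le [IsFiniteMeasure μ] (h : IsLogCarleson μ 1 1)
    {s₁ s₂ : ℝ} (hs₁ : 0 ≤ s₁) (hs₂ : 0 < s₂) :
    ∃ C > 0, ∀ f : ℂ → ℂ, MemQs s₁ f → IntegrableOn (fun t : ℝ => f t) (Ico 0 1) μ ∧
      MemQs s₂ (Imu μ f) ∧ qsNorm s₂ (Imu μ f) ≤ C * qsNorm s₁ f := by
  obtain ⟨C₁, hC₁, hgrowth⟩ := MemQs.exists_norm_le_mul_log hs₁
  obtain ⟨C₂, hC₂, himu⟩ := h.exists_imu_bounds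
  set M := √(12 * s₂ ^ s₂ + 50 ^ s₂ * (4 / s₂))
  refine ⟨(1 + M) * (C₂ * C₁), by positivity, fun f hf => ?_⟩
  have hN : 0 ≤ qsNorm s₁ f := by unfold qsNorm; positivity
  have hCN : 0 ≤ C₁ * qsNorm s₁ f := by positivity
  obtain ⟨hint, h0, hderiv⟩ := himu _ hCN f hf.1.continuousOn (hgrowth f hf)
  refine ⟨hint, memQs_of_norm_deriv_le hs₂ (fun z hz => ?_) hderiv, ?_⟩
  · exact (hasDerivAt_imu hint
      (mem_ball_zero_iff.1 hz)).differentiableAt.differentiableWithinAt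
  calc qsNorm s₂ (Imu μ f) = ‖Imu μ f 0‖ + qsSeminorm s₂ (Imu μ f) :=
        qsNorm_eq_add_qsSeminorm _ _
    _ ≤ C₂ * (C₁ * qsNorm s₁ f) + M * (C₂ * (C₁ * qsNorm s₁ f)) :=
        add_le_add h0 (qsSeminorm_le_of_norm_deriv_le hs₂ (by positivity) hderiv)
    _ = (1 + M) * (C₂ * C₁) * qsNorm s₁ f := by ring

theorem IsLogCarleson.summable_mom_mul_norm_tc [IsFiniteMeasure μ] (h : IsLogCarleson μ 1 1)
    {s : ℝ} (hs : 0 ≤ s) (hf : MemQs s f) : Summable fun k => mom μ k * ‖tc f k‖ := by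
  obtain ⟨C, -, hgrowth⟩ := MemQs.exists_norm_le_mul_log hs
  exact (h.isCarleson zero_le_one).summable_mom_mul_norm_tc hf.1 (hgrowth f hf)

end IntegralOperator

/-! ### The logarithmic test function -/

section TestFunction

variable {μ : Measure ℝ} {s : ℝ}

/-- The function `z ↦ log (2 / (1 - z))`, of extremal growth in every `Q_s`. -/
def logKernel (z : ℂ) : ℂ := Real.log 2 - Complex.log (1 - z)

theorem hasDerivAt_logKernel {z : ℂ} (hz : ‖z‖ < 1) : HasDerivAt logKernel (1 - z)⁻¹ z := by
  have hslit : 1 - z ∈ Complex.slitPlane := by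
    rw [sub_eq_add_neg]
    exact Complex.mem_slitPlane_of_norm_lt_one (by rwa [norm_neg])
  exact ((((hasDerivAt_id' z).const_sub 1).clog hslit).const_sub _).congr_deriv (by ring)

theorem logKernel_ofReal {t : ℝ} (ht : t < 1) : logKernel t = Real.log (2 / (1 - t)) := by
  have ht' : 0 < 1 - t := sub_pos.2 ht
  rw [logKernel, Real.log_div two_ne_zero ht'.ne', Complex.ofReal_sub, Complex.ofReal_log ht'.le]
  push_cast
  rfl

theorem memQs_logKernel (hs : 0 < s) : MemQs s logKernel := by
  refine memQs_of_norm_deriv_le (K := 1) hs (fun z hz => ?_) fun z hz => ?_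
  · exact (hasDerivAt_logKernel
      (mem_ball_zero_iff.1 hz)).differentiableAt.differentiableWithinAt
  · rw [(hasDerivAt_logKernel (mem_ball_zero_iff.1 hz)).deriv, norm_inv, one_div]

theorem isLogCarleson_of_half_le [IsFiniteMeasure μ] {α C : ℝ} (hα : 0 ≤ α) (hs : 0 ≤ s)
    (h : ∀ t ∈ Ico (1 / 2 : ℝ) 1,
      (μ (Ico t 1)).toReal * Real.log (2 / (1 - t)) ^ α ≤ C * (1 - t) ^ s) :
    IsLogCarleson μ α s := by
  set m := (μ univ).toReal * Real.log 4 ^ α * 2 ^ s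
  have hm : 0 ≤ m := by positivity
  refine ⟨|C| + m + 1, by positivity, fun t ht => ?_⟩
  have ht' : 0 < 1 - t := sub_pos.2 ht.2
  rcases le_or_gt (1 / 2) t with hhalf | hhalf
  · refine (h t ⟨hhalf, ht.2⟩).trans ?_
    gcongr
    linarith [le_abs_self C]
  · have hfour : 2 / (1 - t) ≤ 4 := by rw [div_le_iff₀ ht']; linarith
    calc (μ (Ico t 1)).toReal * Real.log (2 / (1 - t)) ^ α
        ≤ (μ univ).toReal * Real.log 4 ^ α := by
          have := (log_two_div_one_sub_pos ht).le
          gcongr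
          · exact measure_ne_top μ _
          · exact subset_univ _
      _ = m * (1 / 2) ^ s := by
          rw [mul_assoc _ ((2 : ℝ) ^ s), ← Real.mul_rpow zero_le_two (by norm_num)]
          norm_num
      _ ≤ (|C| + m + 1) * (1 - t) ^ s := by
          gcongr
          · linarith [abs_nonneg C]
          · linarith

theorem logKernel_mul_div_sq_eq_ofReal {r t : ℝ} (ht : t < 1) :
    logKernel t * t / (1 - t * r) ^ 2 =
      ((Real.log (2 / (1 - t)) * t / (1 - t * r) ^ 2 : ℝ) : ℂ) := by
  rw [logKernel_ofReal ht]
  push_cast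
  rfl

theorem log_div_le_log_mul_div_sq {r t : ℝ} (hr : 1 / 2 ≤ r) (ht : t ∈ Ico r 1) :
    Real.log (2 / (1 - r)) / (8 * (1 - r) ^ 2) ≤
      Real.log (2 / (1 - t)) * t / (1 - t * r) ^ 2 := by
  have ht' : 0 < 1 - t := sub_pos.2 ht.2
  have hr' : 0 < 1 - r := ht'.trans_le (sub_le_sub_left ht.1 1)
  have hlog := (log_two_div_one_sub_pos (t := r) ⟨by linarith, by linarith⟩).le
  have hlog_le : Real.log (2 / (1 - r)) ≤ Real.log (2 / (1 - t)) := by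
    gcongr
    exact ht.1
  have hden : 0 < 1 - t * r := by nlinarith [ht.1]
  have hden_le : 1 - t * r ≤ 2 * (1 - r) := by nlinarith [ht.1]
  calc Real.log (2 / (1 - r)) / (8 * (1 - r) ^ 2)
      = Real.log (2 / (1 - r)) * (1 / 2) / (2 * (1 - r)) ^ 2 := by field_simp; ring
    _ ≤ Real.log (2 / (1 - t)) * t / (1 - t * r) ^ 2 := by
        have := hlog.trans hlog_le
        have ht0 : 1 / 2 ≤ t := hr.trans ht.1
        gcongr

theorem measure_Ico_mul_le_norm_deriv_imu_logKernel [IsFiniteMeasure μ]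
    (hint : IntegrableOn (fun t : ℝ => logKernel t) (Ico 0 1) μ) {r : ℝ}
    (hr : r ∈ Ico (1 / 2 : ℝ) 1) :
    (μ (Ico r 1)).toReal * (Real.log (2 / (1 - r)) / (8 * (1 - r) ^ 2)) ≤
      ‖deriv (Imu μ logKernel) r‖ := by
  have hr0 : 0 ≤ r := one_half_pos.le.trans hr.1
  have hr1 : ‖(r : ℂ)‖ < 1 := norm_ofReal_lt_one ⟨hr0, hr.2⟩
  set φ : ℝ → ℝ := fun t => Real.log (2 / (1 - t)) * t / (1 - t * r) ^ 2
  have hφ_nonneg (t : ℝ) (ht : t ∈ Ico (0 : ℝ) 1) : 0 ≤ φ t :=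
    div_nonneg (mul_nonneg (log_two_div_one_sub_pos ht).le ht.1) (sq_nonneg _)
  have hφ : IntegrableOn φ (Ico 0 1) μ := by
    have hmul : IntegrableOn (fun t : ℝ => logKernel t * t) (Ico 0 1) μ :=
      hint.mul_bdd (c := 1) (by fun_prop)
        ((ae_restrict_mem measurableSet_Ico).mono fun t ht => (norm_ofReal_lt_one ht).le)
    refine (integrableOn_div_one_sub_mul_pow hmul hr1 2).re.congr ?_
    filter_upwards [ae_restrict_mem measurableSet_Ico] with t ht
    simp only [logKernel_mul_div_sq_eq_ofReal ht.2, RCLike.re_to_complex, Complex.ofReal_re, φ]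
  have hderiv : deriv (Imu μ logKernel) r = ((∫ t in Ico (0 : ℝ) 1, φ t ∂μ : ℝ) : ℂ) := by
    rw [(hasDerivAt_imu hint hr1).deriv, ← integral_complex_ofReal]
    exact setIntegral_congr_fun measurableSet_Ico fun t ht => logKernel_mul_div_sq_eq_ofReal ht.2
  have hsub : Ico r 1 ⊆ Ico 0 1 := Ico_subset_Ico_left hr0
  calc (μ (Ico r 1)).toReal * (Real.log (2 / (1 - r)) / (8 * (1 - r) ^ 2))
      ≤ ∫ t in Ico r 1, φ t ∂μ := by
        rw [mul_comm]
        exact setIntegral_ge_of_const_le_real measurableSet_Ico (measure_ne_top μ _)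
          (fun t ht => log_div_le_log_mul_div_sq hr.1 ht) (hφ.mono_set hsub)
    _ ≤ ∫ t in Ico 0 1, φ t ∂μ := setIntegral_mono_set hφ
        ((ae_restrict_mem measurableSet_Ico).mono hφ_nonneg) hsub.eventuallyLE
    _ = ‖deriv (Imu μ logKernel) r‖ := by
        rw [hderiv, Complex.norm_real,
          Real.norm_of_nonneg (setIntegral_nonneg measurableSet_Ico hφ_nonneg)]

theorem isLogCarleson_of_memQs_imu_logKernel [IsFiniteMeasure μ] (hs : 0 ≤ s)
    (hint : IntegrableOn (fun t : ℝ => logKernel t) (Ico 0 1) μ)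
    (h : MemQs s (Imu μ logKernel)) : IsLogCarleson μ 1 1 := by
  set M := 2 / √(Real.log 2 ^ s) * qsSeminorm s (Imu μ logKernel)
  refine isLogCarleson_of_half_le (C := 8 * M) zero_le_one zero_le_one fun r hr => ?_
  have hr0 : 0 ≤ r := one_half_pos.le.trans hr.1
  have hr' : 0 < 1 - r := sub_pos.2 hr.2
  have hbloch : (1 - r) * ‖deriv (Imu μ logKernel) r‖ ≤ M := by
    simpa [abs_of_nonneg hr0] using h.norm_deriv_le hs (norm_ofReal_lt_one ⟨hr0, hr.2⟩)
  simp only [Real.rpow_one]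
  calc (μ (Ico r 1)).toReal * Real.log (2 / (1 - r))
      = 8 * ((1 - r) * ((μ (Ico r 1)).toReal *
          (Real.log (2 / (1 - r)) / (8 * (1 - r) ^ 2)))) * (1 - r) := by field_simp
    _ ≤ 8 * ((1 - r) * ‖deriv (Imu μ logKernel) r‖) * (1 - r) := by
        gcongr
        exact measure_Ico_mul_le_norm_deriv_imu_logKernel hint hr
    _ ≤ 8 * M * (1 - r) := by gcongr

end TestFunction

theorem HmuWD.summable_mom_mul_norm_tc {μ : Measure ℝ} {f : ℂ → ℂ} (h : HmuWD μ f) :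
    Summable fun k => mom μ k * ‖tc f k‖ := by
  simpa only [norm_mom_mul_tc, zero_add] using h.1 0

/-- Theorem 3.5: for any `0 < s₁, s₂ < ∞`, boundedness of `I_μ` (resp. `H_μ`) from `Q_{s₁}`
into `Q_{s₂}` is equivalent to `μ` being a `1`-logarithmic `1`-Carleson measure. -/
theorem imu_hmu_Qs1_Qs2_tfae (μ : Measure ℝ) [IsFiniteMeasure μ]
    (hsupp : μ (Ico (0:ℝ) 1)ᶜ = 0) (s₁ s₂ : ℝ) (hs₁ : 0 < s₁) (hs₂ : 0 < s₂) :
    [ (∀ f : ℂ → ℂ, MemQs s₁ f → ImuWD μ f ∧ MemQs s₂ (Imu μ f)) ∧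
        ∃ C > 0, ∀ f : ℂ → ℂ, MemQs s₁ f → qsNorm s₂ (Imu μ f) ≤ C * qsNorm s₁ f,
      (∀ f : ℂ → ℂ, MemQs s₁ f → HmuWD μ f ∧ MemQs s₂ (Hmu μ f)) ∧
        ∃ C > 0, ∀ f : ℂ → ℂ, MemQs s₁ f → qsNorm s₂ (Hmu μ f) ≤ C * qsNorm s₁ f,
      IsLogCarleson μ 1 1 ].TFAE := by
  tfae_have 1 → 3 := by
    rintro ⟨h, -⟩
    obtain ⟨hwd, hmem⟩ := h logKernel (memQs_logKernel hs₁)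
    have hint : IntegrableOn (fun t : ℝ => logKernel t) (Ico 0 1) μ := by
      simpa using hwd 0 (mem_ball_self one_pos)
    exact isLogCarleson_of_memQs_imu_logKernel hs₂.le hint hmem
  tfae_have 2 → 3 := by
    rintro ⟨h, -⟩
    have hdiff := (memQs_logKernel hs₁).1
    obtain ⟨hwd, hmem⟩ := h logKernel (memQs_logKernel hs₁)
    have hS := hwd.summable_mom_mul_norm_tc
    exact isLogCarleson_of_memQs_imu_logKernel hs₂.le (integrableOn_of_summable_mom hdiff hS)
      ((memQs_congr (hmu_eqOn_imu_of_summable_mom hdiff hS)).1 hmem)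
  tfae_have 3 → 1 := fun h => by
    obtain ⟨C, hC, hbound⟩ := h.exists_qsNorm_imu_le hs₁.le hs₂
    exact ⟨fun f hf => ⟨imuWD_of_integrableOn (hbound f hf).1, (hbound f hf).2.1⟩,
      C, hC, fun f hf => (hbound f hf).2.2⟩
  tfae_have 3 → 2 := fun h => by
    obtain ⟨C, hC, hbound⟩ := h.exists_qsNorm_imu_le hs₁.le hs₂
    have hS (f : ℂ → ℂ) (hf : MemQs s₁ f) := h.summable_mom_mul_norm_tc hs₁.le hf
    have heq (f : ℂ → ℂ) (hf : MemQs s₁ f) := hmu_eqOn_imu_of_summable_mom hf.1 (hS f hf)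
    exact ⟨fun f hf => ⟨hmuWD_of_summable_mom hf.1 (hS f hf),
      (memQs_congr (heq f hf)).2 (hbound f hf).2.1⟩,
      C, hC, fun f hf => (qsNorm_congr (heq f hf) s₂).trans_le (hbound f hf).2.2⟩
  tfae_finish

end PaperHankel
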